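/- Let k ≥ 1 be an integer and let G be a planar simple graph with girth at least 7 and maximum degree Δ(G) ≥ 190 + 2k. Then the k-frugal chromatic number satisfies χ_k(G) ≤ ⌈(Δ(G) − 1)/k⌉ + 2. -/

import Mathlib

open SimpleGraph

/-- A drawing of a simple graph in the plane: vertices are mapped to distinct points,
edges to arcs (injective continuous curves parametrised on `[0,1]`) joining the images of
their endpoints, whose interiors avoid the vertex points and each other. -/
structure PlaneEmbedding {V : Type*} (G : SimpleGraph V) where
  pos : V → ℝ × ℝ
  inj : Function.Injective pos
  arc : G.edgeSet → ℝ → ℝ × ℝ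
  arc_cont : ∀ e, ContinuousOn (arc e) (Set.Icc 0 1)
  arc_inj : ∀ e, Set.InjOn (arc e) (Set.Icc 0 1)
  arc_ends : ∀ e : G.edgeSet, ∃ u v : V, (e : Sym2 V) = s(u, v) ∧
      arc e 0 = pos u ∧ arc e 1 = pos v
  arc_avoid : ∀ e : G.edgeSet, ∀ t ∈ Set.Ioo (0:ℝ) 1, arc e t ∉ Set.range pos
  arc_disjoint : ∀ e f : G.edgeSet, e ≠ f → ∀ s ∈ Set.Ioo (0:ℝ) 1, ∀ t ∈ Set.Ioo (0:ℝ) 1,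
      arc e s ≠ arc f t

/-- A graph is planar if it admits a drawing in the plane. -/
def SimpleGraph.IsPlanar {V : Type*} (G : SimpleGraph V) : Prop :=
  Nonempty (PlaneEmbedding G)

/-- A `k`-frugal colouring: a proper vertex colouring in which no colour appears more than
`k` times in the neighbourhood of any vertex. -/
def SimpleGraph.IsFrugalColoring {V α : Type*} (G : SimpleGraph V) (k : ℕ) (c : V → α) : Prop :=
  (∀ u v, G.Adj u v → c u ≠ c v) ∧
  ∀ (v : V) (a : α), {u | u ∈ G.neighborSet v ∧ c u = a}.ncard ≤ k

/-- The `k`-frugal chromatic number `χ_k(G)`: the least number of colours in a `k`-frugal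
colouring of `G`. -/
noncomputable def SimpleGraph.frugalChromaticNumber {V : Type*} (G : SimpleGraph V) (k : ℕ) : ℕ :=
  sInf {n : ℕ | ∃ c : V → ℕ, (∀ v, c v < n) ∧ G.IsFrugalColoring k c}

section PlaneTopology

open Set Complex Topology

theorem exists_continuousOn_exp_eq_of_convex {E : Type*} [NormedAddCommGroup E] [NormedSpace ℝ E]
    {U : Set E} (hc : Convex ℝ U) (ho : IsOpen U) (f : E → ℂ) (hf : ContinuousOn f U)
    (h0 : ∀ z ∈ U, f z ≠ 0) : ∃ g : E → ℂ, ContinuousOn g U ∧ ∀ z ∈ U, f z = exp (g z) := by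
  rcases U.eq_empty_or_nonempty with rfl | hne
  · exact ⟨f, by simp, by simp⟩
  have := hc.contractibleSpace hne
  have hs : IsSimplyConnected U := by
    rw [IsSimplyConnected]; infer_instance
  obtain ⟨g, hg, hge⟩ := exists_continuousOn_eqOn_exp_comp hs ho hf
    (by rintro ⟨z, hz, h⟩; exact h0 z hz h)
  exact ⟨g, hg, fun z hz => (hge hz).symm⟩

theorem IsPreconnected.exists_int_of_exp_eq_one {X : Type*} [TopologicalSpace X] {S : Set X}
    (hS : IsPreconnected S) {g : X → ℂ} (hg : ContinuousOn g S) (h1 : ∀ x ∈ S, exp (g x) = 1) :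
    ∃ n : ℤ, ∀ x ∈ S, g x = n * (2 * Real.pi * I) := by
  have hex : ∀ x, ∃ n : ℤ, x ∈ S → g x = n * (2 * Real.pi * I) := fun x => by
    by_cases hx : x ∈ S
    · obtain ⟨n, hn⟩ := exp_eq_one_iff.1 (h1 x hx)
      exact ⟨n, fun _ => hn⟩
    · exact ⟨0, fun h => absurd h hx⟩
  choose N hN using hex
  have hNc : ContinuousOn N S := by
    rw [Int.isClosedEmbedding_coe_real.isEmbedding.continuousOn_iff]
    have : ContinuousOn (fun x => (g x / (2 * Real.pi * I)).re) S :=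
      continuous_re.comp_continuousOn (hg.div_const _)
    refine this.congr fun x hx => ?_
    simp only [Function.comp, hN x hx]
    rw [mul_div_cancel_right₀ _ two_pi_I_ne_zero]; simp
  rcases S.eq_empty_or_nonempty with rfl | ⟨x₀, hx₀⟩
  · exact ⟨0, by simp⟩
  · exact ⟨N x₀, fun x hx => by rw [hN x hx, hS.constant hNc hx hx₀]⟩

theorem IsPreconnected.sub_eq_sub_of_exp_eq {X : Type*} [TopologicalSpace X] {S : Set X}
    (hS : IsPreconnected S) {f g : X → ℂ} (hf : ContinuousOn f S) (hg : ContinuousOn g S)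
    (h : ∀ x ∈ S, exp (f x) = exp (g x)) {x y : X} (hx : x ∈ S) (hy : y ∈ S) :
    f x - f y = g x - g y := by
  obtain ⟨n, hn⟩ := hS.exists_int_of_exp_eq_one (hf.sub hg) (fun x hx => by
    simp [exp_sub, h x hx, exp_ne_zero])
  have h1 := hn x hx
  have h2 := hn y hy
  simp only [Pi.sub_apply] at h1 h2
  linear_combination h1 - h2

theorem isPreconnected_of_re_lt (r : ℝ) : IsPreconnected {w : ℂ | w.re < r} :=
  (convex_halfSpace_re_lt r).isPreconnected

theorem isPreconnected_of_lt_re (r : ℝ) : IsPreconnected {w : ℂ | r < w.re} :=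
  (convex_halfSpace_re_gt r).isPreconnected

theorem frontier_connectedComponentIn_subset {K : Set ℂ} (hK : IsClosed K) (p : ℂ) :
    frontier (connectedComponentIn Kᶜ p) ⊆ K := by
  intro z hz
  by_contra hzK
  have ho : IsOpen (connectedComponentIn Kᶜ z) := hK.isOpen_compl.connectedComponentIn
  have hzm : z ∈ connectedComponentIn Kᶜ z := mem_connectedComponentIn hzK
  obtain ⟨y, hy1, hy2⟩ := mem_closure_iff.1 (frontier_subset_closure hz) _ ho hzm
  have e1 := connectedComponentIn_eq hy1
  have e2 := connectedComponentIn_eq hy2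
  have ho' : IsOpen (connectedComponentIn Kᶜ p) := hK.isOpen_compl.connectedComponentIn
  rw [frontier, ho'.interior_eq] at hz
  exact hz.2 (by rw [e2, ← e1]; exact hzm)

theorem closure_connectedComponentIn_subset {K : Set ℂ} (hK : IsClosed K) (p : ℂ) :
    closure (connectedComponentIn Kᶜ p) ⊆ connectedComponentIn Kᶜ p ∪ K := by
  rw [closure_eq_self_union_frontier]
  exact union_subset_union_right _ (frontier_connectedComponentIn_subset hK p)

/-- A function with a zero or pole of order `n` at `p` in a bounded complementary component has no
continuous logarithm on the boundary, unless `n = 0`. -/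
theorem eq_zero_of_exp_eq_zpow_mul {K : Set ℂ} (hK : IsCompact K) {p : ℂ} (hp : p ∉ K)
    (hb : Bornology.IsBounded (connectedComponentIn Kᶜ p)) {s g : ℂ → ℂ}
    (hs : ContinuousOn s (closure (connectedComponentIn Kᶜ p)))
    (hs0 : ∀ z ∈ closure (connectedComponentIn Kᶜ p), s z ≠ 0)
    (hg : ContinuousOn g K) (n : ℤ) (h : ∀ z ∈ K, (z - p) ^ n * s z = exp (g z)) : n = 0 := by
  classical
  set U := connectedComponentIn Kᶜ p with hU
  have hUo : IsOpen U := hK.isClosed.isOpen_compl.connectedComponentIn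
  have hpU : p ∈ U := mem_connectedComponentIn hp
  obtain ⟨g', hg'⟩ := ContinuousMap.exists_restrict_eq hK.isClosed
    ⟨K.domRestrict g, continuousOn_iff_continuous_domRestrict.mp hg⟩
  have hg'e : ∀ z ∈ K, g' z = g z := fun z hz => DFunLike.congr_fun hg' ⟨z, hz⟩
  set σ : ℂ → ℂ := fun z => s z * exp (-g' z) with hσ
  have hσc : ContinuousOn σ (closure U) := hs.mul (by fun_prop)
  have hσ0 : ∀ z ∈ closure U, σ z ≠ 0 := fun z hz => mul_ne_zero (hs0 z hz) (exp_ne_zero _)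
  set H : ℂ → ℂ := U.piecewise (fun z => (z - p) ^ n * σ z) (fun _ => 1) with hH
  have hHc : ContinuousOn H {p}ᶜ := by
    refine ContinuousOn.piecewise ?_ ?_ continuousOn_const
    · rintro z ⟨-, hz⟩
      have hzK := frontier_connectedComponentIn_subset hK.isClosed p hz
      simp only [hσ]
      rw [← mul_assoc, h z hzK, hg'e z hzK, ← exp_add, add_neg_cancel, exp_zero]
    · refine ContinuousOn.mul ?_ (hσc.mono inter_subset_right)
      exact ContinuousOn.zpow₀ (by fun_prop) n (fun z hz => Or.inl (sub_ne_zero.2 hz.1))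
  have hH0 : ∀ z ∈ ({p}ᶜ : Set ℂ), H z ≠ 0 := by
    intro z hz
    by_cases hzU : z ∈ U
    · simp only [hH, piecewise_eq_of_mem _ _ _ hzU]
      exact mul_ne_zero (zpow_ne_zero _ (sub_ne_zero.2 hz)) (hσ0 z (subset_closure hzU))
    · simp [hH, piecewise_eq_of_notMem _ _ _ hzU]
  have hmem : ∀ w : ℂ, p + exp w ∈ ({p}ᶜ : Set ℂ) := fun w => by simp [exp_ne_zero]
  obtain ⟨L, hLc, hL⟩ := exists_continuousOn_exp_eq_of_convex (convex_univ (𝕜 := ℝ) (E := ℂ))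
    isOpen_univ (fun w => H (p + exp w))
    (hHc.comp (by fun_prop) (fun w _ => hmem w)) (fun w _ => hH0 _ (hmem w))
  have hLc' : Continuous L := continuousOn_univ.1 hLc
  obtain ⟨R, hR⟩ := hb.subset_ball p
  obtain ⟨r, hr0, hr⟩ := Metric.isOpen_iff.1 hUo p hpU
  have hR0 : 0 < R := by
    have := hR hpU
    simpa using this
  have hdiff : ∀ w w' : ℂ, L (w + 2 * Real.pi * I) - L (w' + 2 * Real.pi * I) = L w - L w' := by
    intro w w'
    exact isPreconnected_univ.sub_eq_sub_of_exp_eq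
      (f := fun w => L (w + 2 * Real.pi * I)) (by fun_prop) hLc (fun w _ => by
        rw [← hL _ (mem_univ _), ← hL _ (mem_univ _), exp_periodic w]) (mem_univ _) (mem_univ _)
  have hbig : ∀ w : ℂ, Real.log R < w.re → H (p + exp w) = 1 := fun w hw => by
    have : p + exp w ∉ U := fun hm => by
      have := hR hm
      rw [Metric.mem_ball, dist_eq, add_sub_cancel_left, norm_exp] at this
      rw [Real.log_lt_iff_lt_exp hR0] at hw
      linarith
    simp [hH, piecewise_eq_of_notMem _ _ _ this]
  have h1 : L ((Real.log R + 1 : ℝ) + 2 * Real.pi * I) - L ((Real.log R + 1 : ℝ)) = 0 := by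
    have := (isPreconnected_of_lt_re (Real.log R)).sub_eq_sub_of_exp_eq (f := L)
      (g := fun _ => 0) (hLc.mono (subset_univ _)) continuousOn_const (fun w hw => by
        rw [← hL _ (mem_univ _), hbig w hw, exp_zero]) (x := (Real.log R + 1 : ℝ) + 2 * Real.pi * I)
        (y := (Real.log R + 1 : ℝ)) (by simp [-ofReal_add]) (by simp [-ofReal_add])
    simpa using this
  obtain ⟨S, hSc, hS⟩ := exists_continuousOn_exp_eq_of_convex (convex_ball p r) Metric.isOpen_ball
    σ (hσc.mono (hr.trans subset_closure)) (fun z hz => hσ0 z (subset_closure (hr hz)))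
  have hsm : ∀ w : ℂ, w.re < Real.log r → p + exp w ∈ Metric.ball p r := fun w hw => by
    rw [Metric.mem_ball, dist_eq, add_sub_cancel_left, norm_exp]
    exact (Real.lt_log_iff_exp_lt hr0).1 hw
  have h2 : L ((Real.log r - 1 : ℝ) + 2 * Real.pi * I) - L ((Real.log r - 1 : ℝ)) =
      n * (2 * Real.pi * I) := by
    have := (isPreconnected_of_re_lt (Real.log r)).sub_eq_sub_of_exp_eq (f := L)
      (g := fun w => n * w + S (p + exp w)) (hLc.mono (subset_univ _))
      (ContinuousOn.add (by fun_prop) (hSc.comp (by fun_prop) hsm)) (fun w hw => by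
        rw [← hL _ (mem_univ _), exp_add, ← hS _ (hsm w hw), exp_int_mul]
        simp [hH, piecewise_eq_of_mem _ _ _ (hr (hsm w hw))])
        (x := (Real.log r - 1 : ℝ) + 2 * Real.pi * I)
        (y := (Real.log r - 1 : ℝ)) (by simp [-ofReal_sub]) (by simp [-ofReal_sub])
    rw [this, exp_periodic]
    ring
  have h3 := hdiff (Real.log R + 1 : ℝ) (Real.log r - 1 : ℝ)
  have h4 : (n : ℂ) * (2 * Real.pi * I) = 0 := by linear_combination h1 - h2 - h3
  simpa [two_pi_I_ne_zero, Real.pi_ne_zero] using h4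

/-- `f` has a continuous logarithm on `K`. -/
def HasLogOn (f : ℂ → ℂ) (K : Set ℂ) : Prop :=
  ∃ g : ℂ → ℂ, ContinuousOn g K ∧ ∀ z ∈ K, f z = exp (g z)

theorem hasLogOn_div_of_dist_lt {K : Set ℂ} {p q : ℂ} (h : ∀ z ∈ K, dist p q < dist z q) :
    (∀ z ∈ K, (z - p) / (z - q) ∈ slitPlane) := by
  intro z hz
  have hq : z - q ≠ 0 := sub_ne_zero.2 fun e => by
    have := h z hz
    rw [e, _root_.dist_self] at this
    exact absurd this (not_lt.2 dist_nonneg)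
  have e : (z - p) / (z - q) = 1 - (p - q) / (z - q) := by field_simp; ring
  rw [e]
  refine Or.inl ?_
  have h1 : ‖(p - q) / (z - q)‖ < 1 := by
    rw [norm_div, div_lt_one (norm_pos_iff.2 hq), ← dist_eq, ← dist_eq]
    exact h z hz
  have := (re_le_norm ((p - q) / (z - q))).trans_lt h1
  simp only [sub_re, one_re]
  linarith

theorem continuousOn_sub_div_sub {K : Set ℂ} {p q : ℂ} (hq : q ∉ K) :
    ContinuousOn (fun z => (z - p) / (z - q)) K :=
  ContinuousOn.div (by fun_prop) (by fun_prop)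
    (fun z hz => sub_ne_zero.2 fun e => hq (e ▸ hz))

theorem hasLogOn_of_mem_component {K : Set ℂ} (hK : IsClosed K) {p q : ℂ} (hp : p ∉ K)
    (hq : q ∈ connectedComponentIn Kᶜ p) : HasLogOn (fun z => (z - p) / (z - q)) K := by
  have hne : ∀ {x}, x ∈ connectedComponentIn Kᶜ p → ∀ z ∈ K, z - x ≠ 0 := fun {x} hx z hz =>
    sub_ne_zero.2 fun e => connectedComponentIn_subset _ _ hx (e ▸ hz)
  refine isPreconnected_connectedComponentIn.induction₂
    (fun p q => HasLogOn (fun z => (z - p) / (z - q)) K) ?_ ?_ ?_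
    (mem_connectedComponentIn hp) hq
  · intro x hx
    have hxK : x ∈ Kᶜ := connectedComponentIn_subset _ _ hx
    obtain ⟨r, hr, hrK⟩ := Metric.isOpen_iff.1 hK.isOpen_compl x hxK
    refine mem_nhdsWithin_of_mem_nhds ?_
    filter_upwards [Metric.ball_mem_nhds x hr] with y hy
    have hsl : ∀ z ∈ K, (z - y) / (z - x) ∈ slitPlane := hasLogOn_div_of_dist_lt fun z hz => by
      have : z ∉ Metric.ball x r := fun hz' => hrK hz' hz
      rw [Metric.mem_ball] at this hy
      linarith
    refine ⟨fun z => -log ((z - y) / (z - x)),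
      ((continuousOn_sub_div_sub hxK).clog hsl).neg, fun z hz => ?_⟩
    rw [exp_neg, exp_log (slitPlane_ne_zero (hsl z hz)), inv_div]
  · rintro x y z hx hy hz ⟨g, hg, hge⟩ ⟨g', hg', hge'⟩
    refine ⟨fun z => g z + g' z, hg.add hg', fun w hw => ?_⟩
    rw [exp_add, ← hge w hw, ← hge' w hw]
    have := hne hx w hw; have := hne hy w hw; have := hne hz w hw
    field_simp
  · rintro x y hx hy ⟨g, hg, hge⟩
    refine ⟨fun z => -g z, hg.neg, fun w hw => ?_⟩
    rw [exp_neg, ← hge w hw, inv_div]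

theorem isPreconnected_norm_gt {R : ℝ} (hR : 0 < R) : IsPreconnected {z : ℂ | R < ‖z‖} := by
  have : {z : ℂ | R < ‖z‖} = exp '' {w : ℂ | Real.log R < w.re} := by
    ext z
    constructor
    · intro hz
      have hz0 : z ≠ 0 := norm_pos_iff.1 (hR.trans hz)
      exact ⟨log z, by simpa [log_re] using Real.log_lt_log hR hz, exp_log hz0⟩
    · rintro ⟨w, hw, rfl⟩
      simpa [norm_exp] using (Real.log_lt_iff_lt_exp hR).1 hw
  rw [this]
  exact (isPreconnected_of_lt_re _).image _ continuous_exp.continuousOn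

theorem connectedComponentIn_eq_of_unbounded {K : Set ℂ} (hK : IsCompact K) {p q : ℂ}
    (hp : ¬ Bornology.IsBounded (connectedComponentIn Kᶜ p))
    (hq : ¬ Bornology.IsBounded (connectedComponentIn Kᶜ q)) :
    connectedComponentIn Kᶜ p = connectedComponentIn Kᶜ q := by
  obtain ⟨R, hR0, hR⟩ := hK.isBounded.exists_pos_norm_le
  have key : ∀ x, ¬ Bornology.IsBounded (connectedComponentIn Kᶜ x) →
      ∃ z ∈ connectedComponentIn Kᶜ x, R < ‖z‖ := fun x hx => by
    by_contra! hcon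
    exact hx (isBounded_iff_forall_norm_le.2 ⟨R, hcon⟩)
  obtain ⟨z, hz, hzR⟩ := key p hp
  obtain ⟨w, hw, hwR⟩ := key q hq
  have hsub : {z : ℂ | R < ‖z‖} ⊆ connectedComponentIn Kᶜ z :=
    (isPreconnected_norm_gt hR0).subset_connectedComponentIn hzR
      (fun y hy hyK => absurd (hR y hyK) (not_le.2 hy))
  rw [connectedComponentIn_eq hz, connectedComponentIn_eq hw]
  exact connectedComponentIn_eq (hsub hwR)

theorem notMem_closure_connectedComponentIn {K : Set ℂ} (hK : IsClosed K) {p q : ℂ} (hq : q ∉ K)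
    (hne : connectedComponentIn Kᶜ p ≠ connectedComponentIn Kᶜ q) :
    q ∉ closure (connectedComponentIn Kᶜ p) := fun h =>
  (closure_connectedComponentIn_subset hK p h).elim
    (fun h => hne (connectedComponentIn_eq h)) hq

theorem continuousOn_zpow_sub {S : Set ℂ} {q : ℂ} (hq : q ∉ S) (n : ℤ) :
    ContinuousOn (fun z => (z - q) ^ n) S :=
  ContinuousOn.zpow₀ (by fun_prop) n (fun z hz => Or.inl (sub_ne_zero.2 fun e => hq (e ▸ hz)))

theorem zpow_sub_ne_zero {S : Set ℂ} {q : ℂ} (hq : q ∉ S) (n : ℤ) :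
    ∀ z ∈ S, (z - q) ^ n ≠ 0 := fun _ hz => zpow_ne_zero _ (sub_ne_zero.2 fun e => hq (e ▸ hz))

theorem connectedComponentIn_eq_of_hasLogOn {K : Set ℂ} (hK : IsCompact K) {p q : ℂ} (hp : p ∉ K)
    (hq : q ∉ K) (h : HasLogOn (fun z => (z - p) / (z - q)) K) :
    connectedComponentIn Kᶜ p = connectedComponentIn Kᶜ q := by
  by_contra hne
  obtain ⟨g, hg, hge⟩ := h
  by_cases hb : Bornology.IsBounded (connectedComponentIn Kᶜ p)
  · have hcl := notMem_closure_connectedComponentIn hK.isClosed hq hne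
    have := eq_zero_of_exp_eq_zpow_mul hK hp hb (continuousOn_zpow_sub hcl (-1))
      (zpow_sub_ne_zero hcl _) hg 1 (fun z hz => by rw [← hge z hz]; simp [div_eq_mul_inv])
    exact one_ne_zero this
  by_cases hb' : Bornology.IsBounded (connectedComponentIn Kᶜ q)
  · have hcl := notMem_closure_connectedComponentIn hK.isClosed hp (Ne.symm hne)
    have := eq_zero_of_exp_eq_zpow_mul hK hq hb' (continuousOn_zpow_sub hcl 1)
      (zpow_sub_ne_zero hcl _) hg (-1) (fun z hz => by
        rw [← hge z hz]; simp [div_eq_mul_inv, mul_comm])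
    exact absurd this (by norm_num)
  · exact hne (connectedComponentIn_eq_of_unbounded hK hb hb')

end PlaneTopology

section PlaneArcs

open Set Complex Topology

/-- `γ` is an arc meeting the set `K` exactly in its two endpoints. -/
structure IsEar (K : Set ℂ) (γ : ℝ → ℂ) : Prop where
  cont : ContinuousOn γ (Icc 0 1)
  inj : InjOn γ (Icc 0 1)
  zero_mem : γ 0 ∈ K
  one_mem : γ 1 ∈ K
  avoid : ∀ t ∈ Ioo (0 : ℝ) 1, γ t ∉ K

variable {K : Set ℂ} {γ : ℝ → ℂ}

theorem exists_continuousOn_log_comp_Icc {a b : ℝ} (hab : a ≤ b) {f : ℝ → ℂ}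
    (hf : ContinuousOn f (Icc a b)) (h0 : ∀ t ∈ Icc a b, f t ≠ 0) :
    ∃ l : ℝ → ℂ, ContinuousOn l (Icc a b) ∧ ∀ t ∈ Icc a b, f t = exp (l t) := by
  obtain ⟨l, hl, hle⟩ := exists_continuousOn_exp_eq_of_convex (convex_univ (𝕜 := ℝ) (E := ℝ))
    isOpen_univ (IccExtend hab ((Icc a b).domRestrict f))
    (continuousOn_iff_continuous_domRestrict.1 hf).Icc_extend'.continuousOn
    (fun t _ => h0 _ (projIcc a b hab t).2)
  refine ⟨l, hl.mono (subset_univ _), fun t ht => ?_⟩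
  rw [← hle t (mem_univ _), IccExtend_of_mem _ _ ht]
  rfl

namespace IsEar

theorem isCompact_image (h : IsEar K γ) : IsCompact (γ '' Icc 0 1) :=
  isCompact_Icc.image_of_continuousOn h.cont

theorem hasLogOn (h : IsEar K γ) {f : ℂ → ℂ} (hf : ContinuousOn f (γ '' Icc 0 1))
    (h0 : ∀ z ∈ γ '' Icc 0 1, f z ≠ 0) : HasLogOn f (γ '' Icc 0 1) := by
  obtain ⟨l, hl, hle⟩ := exists_continuousOn_log_comp_Icc zero_le_one
    (hf.comp h.cont (mapsTo_image _ _)) (fun t ht => h0 _ (mem_image_of_mem _ ht))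
  have hinv : ContinuousOn (Function.invFunOn γ (Icc 0 1)) (γ '' Icc 0 1) := by
    rw [continuousOn_iff_isClosed]
    intro t ht
    refine ⟨γ '' (Icc 0 1 ∩ t), ((isCompact_Icc.inter_right ht).image_of_continuousOn
      (h.cont.mono inter_subset_left)).isClosed, ?_⟩
    ext z
    constructor
    · rintro ⟨hz, s, hs, rfl⟩
      rw [mem_preimage, h.inj.leftInvOn_invFunOn hs] at hz
      exact ⟨⟨s, ⟨hs, hz⟩, rfl⟩, s, hs, rfl⟩
    · rintro ⟨⟨s, ⟨hs, hst⟩, rfl⟩, hz⟩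
      exact ⟨by rwa [mem_preimage, h.inj.leftInvOn_invFunOn hs], hz⟩
  refine ⟨fun z => l (Function.invFunOn γ (Icc 0 1) z),
    hl.comp hinv (fun z hz => Function.invFunOn_mem hz), ?_⟩
  rintro _ ⟨s, hs, rfl⟩
  dsimp only
  rw [h.inj.leftInvOn_invFunOn hs]
  exact hle s hs

theorem eq_of_mem_inter (h : IsEar K γ) {z : ℂ} (hz : z ∈ K) (hz' : z ∈ γ '' Icc 0 1) :
    z = γ 0 ∨ z = γ 1 := by
  obtain ⟨t, ht, rfl⟩ := hz'
  rcases eq_or_lt_of_le ht.1 with rfl | h0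
  · exact Or.inl rfl
  rcases eq_or_lt_of_le ht.2 with rfl | h1
  · exact Or.inr rfl
  · exact absurd hz (h.avoid t ⟨h0, h1⟩)

theorem hasLogOn_union (h : IsEar K γ) (hK : IsClosed K) {f G E : ℂ → ℂ} (hG : ContinuousOn G K)
    (hGe : ∀ z ∈ K, f z = exp (G z)) (hE : ContinuousOn E (γ '' Icc 0 1))
    (hEe : ∀ z ∈ γ '' Icc 0 1, f z = exp (E z)) (h0 : G (γ 0) = E (γ 0))
    (h1 : G (γ 1) = E (γ 1)) : HasLogOn f (K ∪ γ '' Icc 0 1) := by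
  classical
  have heq : EqOn (K.piecewise G E) E (γ '' Icc 0 1) := fun z hz => by
    by_cases hzK : z ∈ K
    · rw [piecewise_eq_of_mem _ _ _ hzK]
      rcases h.eq_of_mem_inter hzK hz with rfl | rfl
      exacts [h0, h1]
    · exact piecewise_eq_of_notMem _ _ _ hzK
  refine ⟨K.piecewise G E, ContinuousOn.union_of_isClosed (hG.congr (piecewise_eqOn _ _ _))
    (hE.congr heq) hK h.isCompact_image.isClosed, ?_⟩
  rintro z (hz | hz)
  · rw [piecewise_eq_of_mem _ _ _ hz, hGe z hz]
  · rw [heq hz, hEe z hz]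

theorem zero_mem_image (γ : ℝ → ℂ) : γ 0 ∈ γ '' Icc 0 1 := ⟨0, by simp, rfl⟩

theorem one_mem_image (γ : ℝ → ℂ) : γ 1 ∈ γ '' Icc 0 1 := ⟨1, by simp, rfl⟩

/-- Adding an arc between two disjoint closed pieces does not separate points. -/
theorem connectedComponentIn_eq_of_disjoint {A B : Set ℂ} (h : IsEar (A ∪ B) γ) (hA : IsCompact A)
    (hB : IsCompact B) (hAB : Disjoint A B) (h0 : γ 0 ∈ A) (h1 : γ 1 ∈ B) {p q : ℂ}
    (hp : p ∉ A ∪ B ∪ γ '' Icc 0 1) (hq : q ∉ A ∪ B ∪ γ '' Icc 0 1)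
    (hpq : connectedComponentIn (A ∪ B)ᶜ p = connectedComponentIn (A ∪ B)ᶜ q) :
    connectedComponentIn (A ∪ B ∪ γ '' Icc 0 1)ᶜ p =
      connectedComponentIn (A ∪ B ∪ γ '' Icc 0 1)ᶜ q := by
  classical
  have hpK : p ∉ A ∪ B := fun hm => hp (Or.inl hm)
  have hqK : q ∉ A ∪ B := fun hm => hq (Or.inl hm)
  have hK : IsCompact (A ∪ B) := hA.union hB
  obtain ⟨G, hG, hGe⟩ := hasLogOn_of_mem_component hK.isClosed hpK
    (hpq.symm ▸ mem_connectedComponentIn (x := q) hqK)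
  have hpe : p ∉ γ '' Icc 0 1 := fun hm => hp (Or.inr hm)
  have hqe : q ∉ γ '' Icc 0 1 := fun hm => hq (Or.inr hm)
  obtain ⟨E, hE, hEe⟩ := h.hasLogOn (continuousOn_sub_div_sub (p := p) hqe)
    (fun z hz => div_ne_zero (sub_ne_zero.2 fun e => hpe (e ▸ hz))
      (sub_ne_zero.2 fun e => hqe (e ▸ hz)))
  refine connectedComponentIn_eq_of_hasLogOn (hK.union h.isCompact_image) hp hq ?_
  have hB0 : ∀ z ∈ B, z ∉ A := fun z hz hz' => disjoint_left.1 hAB hz' hz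
  set G' : ℂ → ℂ := A.piecewise (fun z => G z + (E (γ 0) - G (γ 0)))
    (fun z => G z + (E (γ 1) - G (γ 1))) with hG'
  have hG'B : EqOn G' (fun z => G z + (E (γ 1) - G (γ 1))) B := fun z hz =>
    piecewise_eq_of_notMem _ _ _ (hB0 z hz)
  refine h.hasLogOn_union hK.isClosed (G := G') ?_ ?_ hE hEe ?_ ?_
  · refine ContinuousOn.union_of_isClosed (ContinuousOn.congr ?_ (piecewise_eqOn _ _ _))
      (ContinuousOn.congr ?_ hG'B) hA.isClosed hB.isClosed
    · exact (hG.mono subset_union_left).add continuousOn_const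
    · exact (hG.mono subset_union_right).add continuousOn_const
  · have hc : ∀ w ∈ A ∪ B, w ∈ γ '' Icc 0 1 → exp (E w - G w) = 1 := fun w hw hw' => by
      rw [exp_sub, ← hEe w hw', ← hGe w hw, div_self]
      rw [hGe w hw]
      exact exp_ne_zero _
    rintro z (hz | hz)
    · rw [hG', piecewise_eq_of_mem _ _ _ hz, exp_add, hc _ h.zero_mem (zero_mem_image γ), mul_one]
      exact hGe z (Or.inl hz)
    · rw [hG'B hz, exp_add, hc _ h.one_mem (one_mem_image γ), mul_one]
      exact hGe z (Or.inr hz)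
  · rw [hG', piecewise_eq_of_mem _ _ _ h0]; ring
  · rw [hG'B h1]; ring

theorem exists_log_and_int (h : IsEar K γ) (hK : IsCompact K) {p q : ℂ}
    (hp : p ∉ K ∪ γ '' Icc 0 1) (hq : q ∉ K ∪ γ '' Icc 0 1)
    (hpq : connectedComponentIn Kᶜ p = connectedComponentIn Kᶜ q) :
    ∃ (G E : ℂ → ℂ) (a : ℤ), ContinuousOn G K ∧ ContinuousOn E (γ '' Icc 0 1) ∧
      (∀ z ∈ K, (z - p) / (z - q) = exp (G z)) ∧
      (∀ z ∈ γ '' Icc 0 1, (z - p) / (z - q) = exp (E z)) ∧ G (γ 0) = E (γ 0) ∧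
      G (γ 1) = E (γ 1) + a * (2 * Real.pi * I) := by
  have hpK : p ∉ K := fun hm => hp (Or.inl hm)
  have hqK : q ∉ K := fun hm => hq (Or.inl hm)
  have hpe : p ∉ γ '' Icc 0 1 := fun hm => hp (Or.inr hm)
  have hqe : q ∉ γ '' Icc 0 1 := fun hm => hq (Or.inr hm)
  obtain ⟨G, hG, hGe⟩ := hasLogOn_of_mem_component hK.isClosed hpK
    (hpq.symm ▸ mem_connectedComponentIn (x := q) hqK)
  obtain ⟨E, hE, hEe⟩ := h.hasLogOn (continuousOn_sub_div_sub (p := p) hqe)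
    (fun z hz => div_ne_zero (sub_ne_zero.2 fun e => hpe (e ▸ hz))
      (sub_ne_zero.2 fun e => hqe (e ▸ hz)))
  have hc : exp (G (γ 0) - E (γ 0)) = 1 := by
    rw [exp_sub, ← hEe _ (zero_mem_image γ), ← hGe _ h.zero_mem, div_self]
    rw [hGe _ h.zero_mem]
    exact exp_ne_zero _
  have hc1 : exp (G (γ 1)) = exp (E (γ 1) + (G (γ 0) - E (γ 0))) := by
    rw [exp_add, hc, ← hEe _ (one_mem_image γ), ← hGe _ h.one_mem, mul_one]
  obtain ⟨a, ha⟩ := exp_eq_exp_iff_exists_int.1 hc1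
  refine ⟨G, fun z => E z + (G (γ 0) - E (γ 0)), a, hG, hE.add continuousOn_const, hGe, ?_, ?_, ?_⟩
  · intro z hz
    rw [exp_add, hc, mul_one]
    exact hEe z hz
  · ring
  · rw [ha]

/-- Adding an arc cuts each complementary component in at most two pieces. -/
theorem connectedComponentIn_eq_or (h : IsEar K γ) (hK : IsCompact K) {p q r : ℂ}
    (hp : p ∉ K ∪ γ '' Icc 0 1) (hq : q ∉ K ∪ γ '' Icc 0 1) (hr : r ∉ K ∪ γ '' Icc 0 1)
    (hpq : connectedComponentIn Kᶜ p = connectedComponentIn Kᶜ q)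
    (hpr : connectedComponentIn Kᶜ p = connectedComponentIn Kᶜ r) :
    connectedComponentIn (K ∪ γ '' Icc 0 1)ᶜ p = connectedComponentIn (K ∪ γ '' Icc 0 1)ᶜ q ∨
    connectedComponentIn (K ∪ γ '' Icc 0 1)ᶜ p = connectedComponentIn (K ∪ γ '' Icc 0 1)ᶜ r ∨
    connectedComponentIn (K ∪ γ '' Icc 0 1)ᶜ q = connectedComponentIn (K ∪ γ '' Icc 0 1)ᶜ r := by
  by_contra! hne
  obtain ⟨hne1, hne2, hne3⟩ := hne
  obtain ⟨G, E, a, hG, hE, hGe, hEe, hGE0, hGE1⟩ := h.exists_log_and_int hK hp hq hpq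
  obtain ⟨G', E', b, hG', hE', hGe', hEe', hGE0', hGE1'⟩ := h.exists_log_and_int hK hp hr hpr
  have hKe : IsCompact (K ∪ γ '' Icc 0 1) := hK.union h.isCompact_image
  have hne : ∀ x ∉ K ∪ γ '' Icc 0 1, ∀ z ∈ K ∪ γ '' Icc 0 1, z - x ≠ 0 := fun x hx z hz =>
    sub_ne_zero.2 fun e => hx (e ▸ hz)
  have hrew : ∀ z ∈ K ∪ γ '' Icc 0 1, (z - p) ^ (b - a) * (z - q) ^ (-b) * (z - r) ^ a =
      ((z - p) / (z - q)) ^ b * ((z - p) / (z - r)) ^ (-a) := fun z hz => by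
    have hzp := hne p hp z hz
    have hzq := hne q hq z hz
    have hzr := hne r hr z hz
    rw [div_zpow, div_zpow, zpow_sub₀ hzp, zpow_neg, zpow_neg, zpow_neg]
    field_simp
  obtain ⟨L, hL, hLe⟩ := h.hasLogOn_union hK.isClosed
    (f := fun z => (z - p) ^ (b - a) * (z - q) ^ (-b) * (z - r) ^ a)
    (G := fun z => b * G z + (-a : ℤ) * G' z) (E := fun z => b * E z + (-a : ℤ) * E' z)
    (by fun_prop) (fun z hz => by
      rw [hrew z (Or.inl hz), exp_add, exp_int_mul, exp_int_mul, hGe z hz, hGe' z hz])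
    (by fun_prop) (fun z hz => by
      rw [hrew z (Or.inr hz), exp_add, exp_int_mul, exp_int_mul, hEe z hz, hEe' z hz])
    (by rw [hGE0, hGE0']) (by rw [hGE1, hGE1']; push_cast; ring)
  have hcont : ∀ {x y z : ℂ} (m n : ℤ), y ∉ K ∪ γ '' Icc 0 1 → z ∉ K ∪ γ '' Icc 0 1 →
      connectedComponentIn (K ∪ γ '' Icc 0 1)ᶜ x ≠ connectedComponentIn (K ∪ γ '' Icc 0 1)ᶜ y →
      connectedComponentIn (K ∪ γ '' Icc 0 1)ᶜ x ≠ connectedComponentIn (K ∪ γ '' Icc 0 1)ᶜ z →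
      ContinuousOn (fun w => (w - y) ^ m * (w - z) ^ n)
        (closure (connectedComponentIn (K ∪ γ '' Icc 0 1)ᶜ x)) ∧
      ∀ w ∈ closure (connectedComponentIn (K ∪ γ '' Icc 0 1)ᶜ x),
        (w - y) ^ m * (w - z) ^ n ≠ 0 := fun m n hy hz hxy hxz => by
    have hy' := notMem_closure_connectedComponentIn hKe.isClosed hy hxy
    have hz' := notMem_closure_connectedComponentIn hKe.isClosed hz hxz
    exact ⟨(continuousOn_zpow_sub hy' m).mul (continuousOn_zpow_sub hz' n),
      fun w hw => mul_ne_zero (zpow_sub_ne_zero hy' m w hw) (zpow_sub_ne_zero hz' n w hw)⟩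
  have hbp : Bornology.IsBounded (connectedComponentIn (K ∪ γ '' Icc 0 1)ᶜ p) → b - a = 0 :=
    fun hb => by
      obtain ⟨h1, h2⟩ := hcont (-b) a hq hr hne1 hne2
      exact eq_zero_of_exp_eq_zpow_mul hKe hp hb h1 h2 hL _ (fun z hz => by
        rw [← hLe z hz]; ring)
  have hbq : Bornology.IsBounded (connectedComponentIn (K ∪ γ '' Icc 0 1)ᶜ q) → -b = 0 :=
    fun hb => by
      obtain ⟨h1, h2⟩ := hcont (b - a) a hp hr hne1.symm hne3
      exact eq_zero_of_exp_eq_zpow_mul hKe hq hb h1 h2 hL _ (fun z hz => by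
        rw [← hLe z hz]; ring)
  have hbr : Bornology.IsBounded (connectedComponentIn (K ∪ γ '' Icc 0 1)ᶜ r) → a = 0 :=
    fun hb => by
      obtain ⟨h1, h2⟩ := hcont (b - a) (-b) hp hq hne2.symm hne3.symm
      exact eq_zero_of_exp_eq_zpow_mul hKe hr hb h1 h2 hL _ (fun z hz => by
        rw [← hLe z hz]; ring)
  have ha : a = 0 := by
    by_cases hr' : Bornology.IsBounded (connectedComponentIn (K ∪ γ '' Icc 0 1)ᶜ r)
    · exact hbr hr'
    · have h1 := hbp (by
        by_contra hp'; exact hne2 (connectedComponentIn_eq_of_unbounded hKe hp' hr'))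
      have h2 := hbq (by
        by_contra hq'; exact hne3 (connectedComponentIn_eq_of_unbounded hKe hq' hr'))
      omega
  refine hne1 (connectedComponentIn_eq_of_hasLogOn hKe hp hq ?_)
  exact h.hasLogOn_union hK.isClosed hG hGe hE hEe hGE0 (by rw [hGE1, ha]; simp)

end IsEar

end PlaneArcs

section PlaneArcs

open Set Complex Topology

variable {K : Set ℂ} {γ : ℝ → ℂ}

/-- The variation of a continuous logarithm of `γ t - p` along an arc depends continuously
on the point `p` off the arc. -/
theorem exists_continuousOn_log_variation {a b : ℝ} (hab : a ≤ b) (hγ : ContinuousOn γ (Icc a b)) :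
    ∃ δ : ℂ → ℂ, ContinuousOn δ (γ '' Icc a b)ᶜ ∧ ∀ p ∉ γ '' Icc a b, ∀ l : ℝ → ℂ,
      ContinuousOn l (Icc a b) → (∀ t ∈ Icc a b, γ t - p = exp (l t)) → δ p = l b - l a := by
  have hex : ∀ p, ∃ l : ℝ → ℂ, p ∉ γ '' Icc a b → ContinuousOn l (Icc a b) ∧
      ∀ t ∈ Icc a b, γ t - p = exp (l t) := fun p => by
    by_cases hp : p ∈ γ '' Icc a b
    · exact ⟨0, fun h => absurd hp h⟩
    · obtain ⟨l, hl⟩ := exists_continuousOn_log_comp_Icc hab (f := fun t => γ t - p)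
        (hγ.sub continuousOn_const)
        (fun t ht => sub_ne_zero.2 fun e => hp ⟨t, ht, e⟩)
      exact ⟨l, fun _ => hl⟩
  choose l hl using hex
  have hb : b ∈ Icc a b := right_mem_Icc.2 hab
  have ha : a ∈ Icc a b := left_mem_Icc.2 hab
  have huniq : ∀ p ∉ γ '' Icc a b, ∀ l' : ℝ → ℂ, ContinuousOn l' (Icc a b) →
      (∀ t ∈ Icc a b, γ t - p = exp (l' t)) → l p b - l p a = l' b - l' a :=
    fun p hp l' hl' hle' => isPreconnected_Icc.sub_eq_sub_of_exp_eq (hl p hp).1 hl'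
      (fun t ht => by rw [← (hl p hp).2 t ht, ← hle' t ht]) hb ha
  refine ⟨fun p => l p b - l p a, ?_, huniq⟩
  intro p₀ hp₀
  have hcl : IsClosed (γ '' Icc a b) := (isCompact_Icc.image_of_continuousOn hγ).isClosed
  obtain ⟨r, hr, hball⟩ := Metric.isOpen_iff.1 hcl.isOpen_compl p₀ hp₀
  refine ContinuousAt.continuousWithinAt ?_
  have hformula : ∀ p ∈ Metric.ball p₀ r, l p b - l p a = (l p₀ b - l p₀ a) +
      (log ((γ b - p) / (γ b - p₀)) - log ((γ a - p) / (γ a - p₀))) := fun p hp => by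
    have hp' : p ∉ γ '' Icc a b := hball hp
    have hsl := hasLogOn_div_of_dist_lt (K := γ '' Icc a b) (p := p) (q := p₀) fun z hz => by
      have : z ∉ Metric.ball p₀ r := fun hz' => hball hz' hz
      rw [Metric.mem_ball] at this hp
      linarith
    rw [huniq p hp' (fun t => l p₀ t + log ((γ t - p) / (γ t - p₀)))]
    · ring
    · exact (hl p₀ hp₀).1.add (((continuousOn_sub_div_sub hp₀).comp hγ (mapsTo_image _ _)).clog
        fun t ht => hsl _ (mem_image_of_mem _ ht))
    · intro t ht
      have h0 : γ t - p₀ ≠ 0 := sub_ne_zero.2 fun e => hp₀ ⟨t, ht, e⟩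
      rw [exp_add, ← (hl p₀ hp₀).2 t ht, exp_log (slitPlane_ne_zero (hsl _ (mem_image_of_mem _ ht)))]
      field_simp
  have hev : (fun p => l p b - l p a) =ᶠ[𝓝 p₀] fun p => (l p₀ b - l p₀ a) +
      (log ((γ b - p) / (γ b - p₀)) - log ((γ a - p) / (γ a - p₀))) := by
    filter_upwards [Metric.ball_mem_nhds p₀ hr] with p hp using hformula p hp
  refine ContinuousAt.congr ?_ hev.symm
  have hc : ∀ t ∈ Icc a b, ContinuousAt (fun p => log ((γ t - p) / (γ t - p₀))) p₀ := by
    intro t ht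
    have h0 : γ t - p₀ ≠ 0 := sub_ne_zero.2 fun e => hp₀ ⟨t, ht, e⟩
    refine ContinuousAt.clog (by fun_prop) ?_
    simp [div_self h0]
  exact continuousAt_const.add ((hc b hb).sub (hc a ha))

theorem not_exists_log_punctured_ball (x : ℂ) {r : ℝ} (hr : 0 < r) {L : ℂ → ℂ}
    (hL : ContinuousOn L (Metric.ball x r \ {x})) :
    ¬ ∀ p ∈ Metric.ball x r \ {x}, x - p = exp (L p) := by
  intro h
  have hm : ∀ w ∈ {w : ℂ | w.re < Real.log r}, x - exp w ∈ Metric.ball x r \ {x} := fun w hw => by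
    refine ⟨?_, by simp [exp_ne_zero]⟩
    rw [Metric.mem_ball, dist_eq, sub_sub_cancel_left, norm_neg, norm_exp]
    exact (Real.lt_log_iff_exp_lt hr).1 hw
  have := (isPreconnected_of_re_lt (Real.log r)).sub_eq_sub_of_exp_eq
    (f := fun w => L (x - exp w)) (g := id) (hL.comp (by fun_prop) hm) continuousOn_id
    (fun w hw => by rw [← h _ (hm w hw)]; simp)
    (x := (Real.log r - 1 : ℝ) + 2 * Real.pi * I)
    (y := (Real.log r - 1 : ℝ)) (by simp [-ofReal_sub]) (by simp [-ofReal_sub])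
  rw [exp_periodic] at this
  simp [Real.pi_ne_zero] at this

/-- Half-arc version: a logarithm of `x - p` for `p` off a curve from `u` to `x`. -/
theorem exists_log_sub_off_arc {a b : ℝ} (hab : a ≤ b) (hγ : ContinuousOn γ (Icc a b)) {s t : ℝ}
    (hst : s = a ∧ t = b ∨ s = b ∧ t = a) {r : ℝ} (hr : r ≤ dist (γ s) (γ t)) (hr0 : 0 < r) :
    ∃ m : ℂ → ℂ, ContinuousOn m (Metric.ball (γ t) r \ γ '' Icc a b) ∧
      (∀ p ∈ Metric.ball (γ t) r \ γ '' Icc a b, γ t - p = exp (m p)) ∧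
      ∀ p ∈ Metric.ball (γ t) r \ γ '' Icc a b, ∀ q ∈ Metric.ball (γ t) r \ γ '' Icc a b,
        ∀ g : ℂ → ℂ, ContinuousOn g (γ '' Icc a b) →
          (∀ z ∈ γ '' Icc a b, (z - p) / (z - q) = exp (g z)) →
        m p - m q = g (γ t) - g (γ s) + (log ((γ s - p) / (γ s - γ t)) -
          log ((γ s - q) / (γ s - γ t))) := by
  obtain ⟨δ, hδ, hδl⟩ := exists_continuousOn_log_variation hab hγ
  have hsI : s ∈ Icc a b := by rcases hst with ⟨rfl, rfl⟩ | ⟨rfl, rfl⟩ <;> simp [hab]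
  have htI : t ∈ Icc a b := by rcases hst with ⟨rfl, rfl⟩ | ⟨rfl, rfl⟩ <;> simp [hab]
  obtain ⟨σ, hσ⟩ : ∃ σ : ℂ, ∀ l : ℝ → ℂ, l t - l s = σ * (l b - l a) := by
    rcases hst with ⟨rfl, rfl⟩ | ⟨rfl, rfl⟩
    · exact ⟨1, fun l => by ring⟩
    · exact ⟨-1, fun l => by ring⟩
  have hst0 : γ s - γ t ≠ 0 := sub_ne_zero.2 fun e => by rw [e, _root_.dist_self] at hr; linarith
  have hlex : ∀ p ∉ γ '' Icc a b, ∃ l : ℝ → ℂ, ContinuousOn l (Icc a b) ∧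
      ∀ t ∈ Icc a b, γ t - p = exp (l t) := fun p hp =>
    exists_continuousOn_log_comp_Icc hab (f := fun t => γ t - p)
        (hγ.sub continuousOn_const)
        (fun t ht => sub_ne_zero.2 fun e => hp ⟨t, ht, e⟩)
  have hsl : ∀ p ∈ Metric.ball (γ t) r, (γ s - p) / (γ s - γ t) ∈ slitPlane := fun p hp =>
    hasLogOn_div_of_dist_lt (K := {γ s}) (fun z hz => by
      rw [mem_singleton_iff.1 hz]
      exact (Metric.mem_ball.1 hp).trans_le hr) _ rfl
  refine ⟨fun p => σ * δ p + log ((γ s - p) / (γ s - γ t)) + log (γ s - γ t), ?_, ?_, ?_⟩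
  · refine ContinuousOn.add (ContinuousOn.add ?_ ?_) continuousOn_const
    · exact continuousOn_const.mul (hδ.mono fun p hp => hp.2)
    · exact ContinuousOn.clog (by fun_prop) (fun p hp => hsl p hp.1)
  · rintro p ⟨hp, hpe⟩
    obtain ⟨l, hl, hle⟩ := hlex p hpe
    rw [exp_add, exp_add, exp_log hst0, exp_log (slitPlane_ne_zero (hsl p hp)),
      hδl p hpe l hl hle, ← hσ l, exp_sub, ← hle s hsI, ← hle t htI]
    have : γ s - p ≠ 0 := sub_ne_zero.2 fun e => hpe ⟨s, hsI, e⟩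
    field_simp
  · rintro p ⟨hp, hpe⟩ q ⟨hq, hqe⟩ g hg hge
    obtain ⟨l, hl, hle⟩ := hlex q hqe
    have h1 := hδl q hqe l hl hle
    have h2 := hδl p hpe (fun t => l t + g (γ t)) (hl.add (hg.comp hγ (mapsTo_image _ _)))
      (fun t ht => by
        have : γ t - q ≠ 0 := sub_ne_zero.2 fun e => hqe ⟨t, ht, e⟩
        rw [exp_add, ← hle t ht, ← hge _ (mem_image_of_mem _ ht)]
        field_simp)
    have h3 := hσ fun t => g (γ t)
    dsimp only
    rw [h1, h2, h3]
    ring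

namespace IsEar

/-- Adding an arc whose endpoints are already connected separates two nearby points. -/
theorem exists_separated (h : IsEar K γ) (hK : IsCompact K) {S : Set ℂ} (hS : IsPreconnected S)
    (hSK : S ⊆ K) (h0 : γ 0 ∈ S) (h1 : γ 1 ∈ S) :
    ∃ p q, p ∉ K ∪ γ '' Icc 0 1 ∧ q ∉ K ∪ γ '' Icc 0 1 ∧
      p ∈ connectedComponentIn Kᶜ (γ (1 / 2)) ∧ q ∈ connectedComponentIn Kᶜ (γ (1 / 2)) ∧
      connectedComponentIn (K ∪ γ '' Icc 0 1)ᶜ p ≠ connectedComponentIn (K ∪ γ '' Icc 0 1)ᶜ q := by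
  classical
  by_contra! hcon
  have hxK : γ (1 / 2) ∈ Kᶜ := h.avoid _ ⟨by norm_num, by norm_num⟩
  set x := γ (1 / 2) with hx
  obtain ⟨r, hr0, hrK⟩ := Metric.isOpen_iff.1 hK.isClosed.isOpen_compl x hxK
  have hDcomp : Metric.ball x r ⊆ connectedComponentIn Kᶜ x :=
    (convex_ball x r).isPreconnected.subset_connectedComponentIn (Metric.mem_ball_self hr0) hrK
  have hKr : ∀ z ∈ K, r ≤ dist z x := fun z hz => by
    by_contra! hlt
    exact hrK (Metric.mem_ball.2 hlt) hz
  have hI1 : Icc (0 : ℝ) (1 / 2) ⊆ Icc 0 1 := Icc_subset_Icc_right (by norm_num)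
  have hI2 : Icc (1 / 2 : ℝ) 1 ⊆ Icc 0 1 := Icc_subset_Icc_left (by norm_num)
  obtain ⟨m₁, hm₁, hm₁e, hm₁d⟩ := exists_log_sub_off_arc (a := 0) (b := 1 / 2) (by norm_num)
    (h.cont.mono hI1) (Or.inl ⟨rfl, rfl⟩) (hKr _ h.zero_mem) hr0
  obtain ⟨m₂, hm₂, hm₂e, hm₂d⟩ := exists_log_sub_off_arc (a := 1 / 2) (b := 1) (by norm_num)
    (h.cont.mono hI2) (Or.inr ⟨rfl, rfl⟩) (hKr _ h.one_mem) hr0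
  rw [← hx] at *
  have hunion : γ '' Icc 0 1 = γ '' Icc 0 (1 / 2) ∪ γ '' Icc (1 / 2) 1 := by
    rw [← image_union, Icc_union_Icc_eq_Icc (by norm_num) (by norm_num)]
  have hinter : ∀ z, z ∈ γ '' Icc 0 (1 / 2) → z ∈ γ '' Icc (1 / 2) 1 → z = x := by
    rintro z ⟨s, hs, rfl⟩ ⟨t, ht, hst⟩
    have := h.inj (hI2 ht) (hI1 hs) hst
    subst this
    rw [hx, le_antisymm hs.2 ht.1]
  have hdiff : ∀ p ∈ Metric.ball x r \ γ '' Icc 0 1, ∀ q ∈ Metric.ball x r \ γ '' Icc 0 1,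
      m₁ p - m₂ p = m₁ q - m₂ q := by
    rintro p ⟨hp, hpe⟩ q ⟨hq, hqe⟩
    have hpKe : p ∉ K ∪ γ '' Icc 0 1 := by rintro (hm | hm); exacts [hrK hp hm, hpe hm]
    have hqKe : q ∉ K ∪ γ '' Icc 0 1 := by rintro (hm | hm); exacts [hrK hq hm, hqe hm]
    have hcomp := hcon p q hpKe hqKe (hDcomp hp) (hDcomp hq)
    obtain ⟨g, hg, hge⟩ := hasLogOn_of_mem_component (hK.union h.isCompact_image).isClosed hpKe
      (hcomp.symm ▸ mem_connectedComponentIn (x := q) hqKe)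
    rw [hunion, mem_union, not_or] at hpe hqe
    have e₁ := hm₁d p ⟨hp, hpe.1⟩ q ⟨hq, hqe.1⟩ g
      (hg.mono ((image_mono hI1).trans subset_union_right))
      (fun z hz => hge z (Or.inr (image_mono hI1 hz)))
    have e₂ := hm₂d p ⟨hp, hpe.2⟩ q ⟨hq, hqe.2⟩ g
      (hg.mono ((image_mono hI2).trans subset_union_right))
      (fun z hz => hge z (Or.inr (image_mono hI2 hz)))
    have hsl : ∀ y ∈ Metric.ball x r, ∀ z ∈ K, (z - y) / (z - x) ∈ slitPlane := fun y hy =>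
      hasLogOn_div_of_dist_lt fun z hz => (Metric.mem_ball.1 hy).trans_le (hKr z hz)
    have hslc : ∀ y ∈ Metric.ball x r, ContinuousOn (fun z => log ((z - y) / (z - x))) S :=
      fun y hy => ((continuousOn_sub_div_sub hxK).mono hSK).clog fun z hz => hsl y hy z (hSK hz)
    have e₃ := hS.sub_eq_sub_of_exp_eq (f := g)
      (g := fun z => log ((z - p) / (z - x)) - log ((z - q) / (z - x)))
      (hg.mono (hSK.trans subset_union_left)) ((hslc p hp).sub (hslc q hq)) (fun z hz => by
        have hzx : z - x ≠ 0 := sub_ne_zero.2 fun e => hxK (e ▸ hSK hz)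
        rw [← hge z (Or.inl (hSK hz)), exp_sub, exp_log (slitPlane_ne_zero (hsl p hp z (hSK hz))),
          exp_log (slitPlane_ne_zero (hsl q hq z (hSK hz))), div_div_div_cancel_right₀ hzx])
      h0 h1
    linear_combination e₁ - e₂ - e₃
  obtain ⟨c, hc1, hc⟩ : ∃ c : ℂ, exp c = 1 ∧ ∀ p ∈ Metric.ball x r \ γ '' Icc 0 1,
      m₁ p = m₂ p + c := by
    rcases (Metric.ball x r \ γ '' Icc 0 1).eq_empty_or_nonempty with he | ⟨q, hq⟩
    · exact ⟨0, exp_zero, by simp [he]⟩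
    · refine ⟨m₁ q - m₂ q, ?_, fun p hp => by linear_combination hdiff p hp q hq⟩
      have hqe := hq.2
      rw [hunion, mem_union, not_or] at hqe
      rw [exp_sub, ← hm₁e q ⟨hq.1, hqe.1⟩, ← hm₂e q ⟨hq.1, hqe.2⟩, div_self]
      rw [hm₁e q ⟨hq.1, hqe.1⟩]
      exact exp_ne_zero _
  set L : ℂ → ℂ := (Metric.ball x r \ γ '' Icc 0 (1 / 2)).piecewise m₁ (fun p => m₂ p + c) with hL
  have hL₁ : EqOn L m₁ (Metric.ball x r \ γ '' Icc 0 (1 / 2)) := piecewise_eqOn _ _ _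
  have hL₂ : EqOn L (fun p => m₂ p + c) (Metric.ball x r \ γ '' Icc (1 / 2) 1) := fun p hp => by
    by_cases hp' : p ∈ Metric.ball x r \ γ '' Icc 0 (1 / 2)
    · rw [hL₁ hp']
      refine hc p ⟨hp.1, ?_⟩
      rw [hunion]
      rintro (hm | hm)
      exacts [hp'.2 hm, hp.2 hm]
    · exact piecewise_eq_of_notMem _ _ _ hp'
  have hcov : Metric.ball x r \ {x} ⊆
      (Metric.ball x r \ γ '' Icc 0 (1 / 2)) ∪ (Metric.ball x r \ γ '' Icc (1 / 2) 1) := by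
    rintro p ⟨hp, hpx⟩
    by_cases hp' : p ∈ γ '' Icc 0 (1 / 2)
    · exact Or.inr ⟨hp, fun hm => hpx (hinter p hp' hm)⟩
    · exact Or.inl ⟨hp, hp'⟩
  have hopen : ∀ I : Set ℝ, IsCompact I → I ⊆ Icc 0 1 → IsOpen (Metric.ball x r \ γ '' I) :=
    fun I hI hI' => Metric.isOpen_ball.sdiff
      (hI.image_of_continuousOn (h.cont.mono hI')).isClosed
  refine not_exists_log_punctured_ball x hr0 (L := L) (ContinuousOn.mono
    (ContinuousOn.union_of_isOpen (hm₁.congr hL₁) ((hm₂.add continuousOn_const).congr hL₂)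
      (hopen _ isCompact_Icc hI1) (hopen _ isCompact_Icc hI2)) hcov) fun p hp => ?_
  rcases hcov hp with hp | hp
  · rw [hL₁ hp, hm₁e p hp]
  · rw [hL₂ hp, exp_add, hc1, mul_one, hm₂e p hp]

end IsEar

end PlaneArcs

section PlaneFaces

open Set Complex Topology

/-- The connected components of the complement of a plane set. -/
def planeFaces (K : Set ℂ) : Set (Set ℂ) := connectedComponentIn Kᶜ '' Kᶜ

variable {K K' F : Set ℂ} {γ : ℝ → ℂ}

theorem planeFaces_eq (hF : F ∈ planeFaces K) {z : ℂ} (hz : z ∈ F) :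
    F = connectedComponentIn Kᶜ z := by
  obtain ⟨p, -, rfl⟩ := hF
  exact connectedComponentIn_eq hz

theorem planeFaces_subset_compl (hF : F ∈ planeFaces K) : F ⊆ Kᶜ := by
  obtain ⟨p, -, rfl⟩ := hF
  exact connectedComponentIn_subset _ _

theorem planeFaces_nonempty (hF : F ∈ planeFaces K) : F.Nonempty := by
  obtain ⟨p, hp, rfl⟩ := hF
  exact ⟨p, mem_connectedComponentIn hp⟩

theorem planeFaces_isPreconnected (hF : F ∈ planeFaces K) : IsPreconnected F := by
  obtain ⟨p, -, rfl⟩ := hF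
  exact isPreconnected_connectedComponentIn

theorem frontier_subset_of_mem_planeFaces (hK : IsClosed K) (hF : F ∈ planeFaces K) :
    frontier F ⊆ K := by
  obtain ⟨p, -, rfl⟩ := hF
  exact frontier_connectedComponentIn_subset hK p

theorem mem_planeFaces_of_frontier_subset (hsub : K' ⊆ K)
    (hF : F ∈ planeFaces K) (hfr : frontier F ⊆ K') : F ∈ planeFaces K' := by
  obtain ⟨p, hp⟩ := planeFaces_nonempty hF
  have hFK' : F ⊆ K'ᶜ := (planeFaces_subset_compl hF).trans (compl_subset_compl.2 hsub)
  refine ⟨p, hFK' hp, ?_⟩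
  refine Subset.antisymm ?_ ((planeFaces_isPreconnected hF).subset_connectedComponentIn hp hFK')
  have hpre : IsPreconnected (connectedComponentIn K'ᶜ p) := isPreconnected_connectedComponentIn
  by_contra hne
  obtain ⟨y, hy, hyF⟩ := not_subset.1 hne
  have hcover : connectedComponentIn K'ᶜ p ⊆ interior F ∪ (closure F)ᶜ := fun z hz => by
    by_cases hzc : z ∈ closure F
    · left
      by_contra hzi
      exact connectedComponentIn_subset _ _ hz (hfr ⟨hzc, hzi⟩)
    · exact Or.inr hzc
  obtain ⟨z, -, hz1, hz2⟩ := hpre _ _ isOpen_interior isClosed_closure.isOpen_compl hcover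
    ⟨p, mem_connectedComponentIn (hFK' hp), (hcover (mem_connectedComponentIn (hFK' hp))).elim id
      fun h => absurd (subset_closure hp) h⟩
    ⟨y, hy, (hcover hy).elim (fun h => absurd (interior_subset h) hyF) id⟩
  exact hz2 (subset_closure (interior_subset hz1))

theorem mem_planeFaces_union {e : Set ℂ} (hF : F ∈ planeFaces K) (hd : Disjoint F e) :
    F ∈ planeFaces (K ∪ e) := by
  obtain ⟨p, hp⟩ := planeFaces_nonempty hF
  have hFK : F ⊆ (K ∪ e)ᶜ := fun z hz hm =>
    hm.elim (planeFaces_subset_compl hF hz) (Set.disjoint_left.1 hd hz)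
  refine ⟨p, hFK hp, Subset.antisymm ?_
    ((planeFaces_isPreconnected hF).subset_connectedComponentIn hp hFK)⟩
  rw [planeFaces_eq hF hp]
  exact connectedComponentIn_mono _ (compl_subset_compl.2 subset_union_left)

namespace IsEar

theorem mem_connectedComponentIn_mid (h : IsEar K γ) {t : ℝ} (ht : t ∈ Ioo (0 : ℝ) 1) :
    γ t ∈ connectedComponentIn Kᶜ (γ (1 / 2)) := by
  have hpre : IsPreconnected (γ '' Ioo 0 1) :=
    isPreconnected_Ioo.image _ (h.cont.mono Ioo_subset_Icc_self)
  refine hpre.subset_connectedComponentIn ⟨1 / 2, ⟨by norm_num, by norm_num⟩, rfl⟩ ?_ ⟨t, ht, rfl⟩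
  rintro _ ⟨s, hs, rfl⟩
  exact h.avoid s hs

theorem mid_notMem (h : IsEar K γ) : γ (1 / 2) ∉ K := h.avoid _ ⟨by norm_num, by norm_num⟩

theorem disjoint_of_ne (h : IsEar K γ) (hF : F ∈ planeFaces K)
    (hne : F ≠ connectedComponentIn Kᶜ (γ (1 / 2))) : Disjoint F (γ '' Icc 0 1) := by
  rw [Set.disjoint_left]
  rintro _ hz ⟨t, ht, rfl⟩
  have hzK := planeFaces_subset_compl hF hz
  have ht' : t ∈ Ioo (0 : ℝ) 1 := by
    refine ⟨lt_of_le_of_ne ht.1 ?_, lt_of_le_of_ne ht.2 ?_⟩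
    · rintro rfl; exact hzK h.zero_mem
    · rintro rfl; exact hzK h.one_mem
  exact hne ((planeFaces_eq hF hz).trans
    (connectedComponentIn_eq (h.mem_connectedComponentIn_mid ht')).symm)

theorem eq_of_mem_sdiff (h : IsEar K γ) (hF : F ∈ planeFaces (K ∪ γ '' Icc 0 1))
    (hF' : F ∉ planeFaces K) {z : ℂ} (hz : z ∈ F) :
    connectedComponentIn Kᶜ z = connectedComponentIn Kᶜ (γ (1 / 2)) := by
  by_contra hne
  have hzK : z ∉ K := fun hm => planeFaces_subset_compl hF hz (Or.inl hm)
  have hU : connectedComponentIn Kᶜ z ∈ planeFaces K := ⟨z, hzK, rfl⟩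
  have hU' := mem_planeFaces_union hU (h.disjoint_of_ne hU hne)
  rw [planeFaces_eq hU' (mem_connectedComponentIn hzK), ← planeFaces_eq hF hz] at hU
  exact hF' hU

theorem encard_planeFaces_sdiff_le (h : IsEar K γ) (hK : IsCompact K) :
    (planeFaces (K ∪ γ '' Icc 0 1) \ planeFaces K).encard ≤ 2 := by
  by_contra! hlt
  obtain ⟨t, hts, ht⟩ := exists_subset_encard_eq (Order.add_one_le_of_lt hlt)
  obtain ⟨A, B, C, hAB, hAC, hBC, rfl⟩ := encard_eq_three.1 (ht.trans (by norm_num))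
  have hA := hts (show A ∈ _ by simp)
  have hB := hts (show B ∈ _ by simp)
  have hC := hts (show C ∈ _ by simp)
  obtain ⟨p, hp⟩ := planeFaces_nonempty hA.1
  obtain ⟨q, hq⟩ := planeFaces_nonempty hB.1
  obtain ⟨r, hr⟩ := planeFaces_nonempty hC.1
  have hp' := h.eq_of_mem_sdiff hA.1 hA.2 hp
  have hq' := h.eq_of_mem_sdiff hB.1 hB.2 hq
  have hr' := h.eq_of_mem_sdiff hC.1 hC.2 hr
  have := h.connectedComponentIn_eq_or hK (planeFaces_subset_compl hA.1 hp)
    (planeFaces_subset_compl hB.1 hq) (planeFaces_subset_compl hC.1 hr)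
    (hp'.trans hq'.symm) (hp'.trans hr'.symm)
  rw [← planeFaces_eq hA.1 hp, ← planeFaces_eq hB.1 hq, ← planeFaces_eq hC.1 hr] at this
  tauto

theorem finite_planeFaces (h : IsEar K γ) (hK : IsCompact K) (hf : (planeFaces K).Finite) :
    (planeFaces (K ∪ γ '' Icc 0 1)).Finite := by
  have h2 : (planeFaces (K ∪ γ '' Icc 0 1) \ planeFaces K).Finite :=
    finite_of_encard_le_coe (k := 2) (h.encard_planeFaces_sdiff_le hK)
  exact (h2.union hf).subset (by rw [sdiff_union_self]; exact subset_union_left)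

theorem ncard_planeFaces_add_one_le (h : IsEar K γ) (hK : IsCompact K)
    (hf : (planeFaces K).Finite) {S : Set ℂ} (hS : IsPreconnected S)
    (hSK : S ⊆ K) (h0 : γ 0 ∈ S) (h1 : γ 1 ∈ S) :
    (planeFaces K).ncard + 1 ≤ (planeFaces (K ∪ γ '' Icc 0 1)).ncard := by
  obtain ⟨p, q, hp, hq, hpx, hqx, hne⟩ := h.exists_separated hK hS hSK h0 h1
  set Φ := connectedComponentIn Kᶜ (γ (1 / 2)) with hΦ
  have hΦm : Φ ∈ planeFaces K := ⟨_, h.mid_notMem, rfl⟩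
  have hother : ∀ y ∉ K ∪ γ '' Icc 0 1, y ∈ Φ →
      connectedComponentIn (K ∪ γ '' Icc 0 1)ᶜ y ∉ planeFaces K \ {Φ} := by
    rintro y hy hyΦ ⟨hm, hm'⟩
    have := planeFaces_eq hm (mem_connectedComponentIn hy)
    exact hm' (this.trans (connectedComponentIn_eq hyΦ).symm)
  have hsub : insert (connectedComponentIn (K ∪ γ '' Icc 0 1)ᶜ p)
      (insert (connectedComponentIn (K ∪ γ '' Icc 0 1)ᶜ q) (planeFaces K \ {Φ})) ⊆
      planeFaces (K ∪ γ '' Icc 0 1) := by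
    refine insert_subset ⟨p, hp, rfl⟩ (insert_subset ⟨q, hq, rfl⟩ ?_)
    rintro F ⟨hF, hF'⟩
    exact mem_planeFaces_union hF (h.disjoint_of_ne hF hF')
  have hcard := ncard_le_ncard hsub (h.finite_planeFaces hK hf)
  rw [ncard_insert_of_notMem ?_ ((hf.subset sdiff_subset).insert _),
    ncard_insert_of_notMem (hother q hq hqx) (hf.subset sdiff_subset)] at hcard
  · have := ncard_sdiff_singleton_add_one hΦm hf
    omega
  · rintro (hm | hm)
    · exact hne hm
    · exact hother p hp hpx hm

end IsEar

end PlaneFaces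

theorem SimpleGraph.IsAcyclic.ncard_edgeSet_add_one_le {V : Type*} {H : SimpleGraph V}
    (hH : H.IsAcyclic) {W : Finset V} (hW : W.Nonempty) (hsup : ∀ u v, H.Adj u v → u ∈ W) :
    H.edgeSet.ncard + 1 ≤ W.card := by
  obtain ⟨T, hle, hT⟩ := exists_maximal_isAcyclic_of_le_isAcyclic
    (G := (⊤ : SimpleGraph W)) le_top (hH.induce W)
  have : Nonempty W := hW.to_subtype
  have hTree : T.IsTree := isTree_iff_maximal_isAcyclic.2
    ⟨inferInstance, hT.1.2, fun T' hT' h => hT.2 ⟨le_top, hT'⟩ h⟩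
  have hcard := (isTree_iff_connected_and_card.1 hTree).2
  rw [Nat.card_coe_set_eq, Nat.card_eq_fintype_card (α := W), Fintype.card_coe] at hcard
  have hsub : H.edgeSet ⊆ Sym2.map Subtype.val '' T.edgeSet := by
    intro e
    induction e with | h u v =>
    intro he
    exact ⟨s(⟨u, hsup u v he⟩, ⟨v, hsup v u he.symm⟩), hle he, rfl⟩
  have := (Set.ncard_le_ncard hsub (Set.toFinite _)).trans (Set.ncard_image_le (Set.toFinite _))
  omega

theorem SimpleGraph.fromEdgeSet_insert_deleteEdges {V : Type*} {e : Sym2 V} {S : Set (Sym2 V)}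
    (heS : e ∉ S) : (fromEdgeSet (insert e S)).deleteEdges {e} = fromEdgeSet S := by
  rw [deleteEdges, ← fromEdgeSet_sdiff, Set.insert_sdiff_of_mem _ (Set.mem_singleton e),
    Set.sdiff_singleton_eq_self heS]

namespace PlaneEmbedding

open Set

variable {V : Type*} {G : SimpleGraph V} (P : PlaneEmbedding G)

/-- The position of a vertex as a complex number. -/
noncomputable def pt (v : V) : ℂ := Complex.equivRealProdCLM.symm (P.pos v)

open Classical in
/-- The arc of an edge as a curve in the complex plane. -/
noncomputable def curve (e : Sym2 V) (t : ℝ) : ℂ :=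
  if h : e ∈ G.edgeSet then Complex.equivRealProdCLM.symm (P.arc ⟨e, h⟩ t) else 0

/-- All vertices together with the arcs of a set of edges. -/
def drawing (S : Set (Sym2 V)) : Set ℂ := range P.pt ∪ ⋃ e ∈ S, P.curve e '' Icc 0 1

theorem curve_eq {e : Sym2 V} (he : e ∈ G.edgeSet) :
    P.curve e = fun t => Complex.equivRealProdCLM.symm (P.arc ⟨e, he⟩ t) := by
  ext t; simp [curve, he]

theorem pt_injective : Function.Injective P.pt := fun _ _ h =>
  P.inj (Complex.equivRealProdCLM.symm.injective h)

variable {e f : Sym2 V} {S : Set (Sym2 V)}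

theorem continuousOn_curve (he : e ∈ G.edgeSet) : ContinuousOn (P.curve e) (Icc 0 1) := by
  rw [P.curve_eq he]
  exact Complex.equivRealProdCLM.symm.continuous.comp_continuousOn (P.arc_cont _)

theorem injOn_curve (he : e ∈ G.edgeSet) : InjOn (P.curve e) (Icc 0 1) := by
  rw [P.curve_eq he]
  exact fun s hs t ht h => P.arc_inj _ hs ht (Complex.equivRealProdCLM.symm.injective h)

theorem curve_ends (he : e ∈ G.edgeSet) :
    ∃ u v, e = s(u, v) ∧ P.curve e 0 = P.pt u ∧ P.curve e 1 = P.pt v := by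
  obtain ⟨u, v, h, h0, h1⟩ := P.arc_ends ⟨e, he⟩
  exact ⟨u, v, h, by rw [P.curve_eq he, pt, ← h0], by rw [P.curve_eq he, pt, ← h1]⟩

theorem curve_avoid (he : e ∈ G.edgeSet) {t : ℝ} (ht : t ∈ Ioo (0 : ℝ) 1) :
    P.curve e t ∉ range P.pt := by
  rintro ⟨v, hv⟩
  rw [P.curve_eq he] at hv
  exact P.arc_avoid ⟨e, he⟩ t ht ⟨v, Complex.equivRealProdCLM.symm.injective hv⟩

theorem curve_ne (he : e ∈ G.edgeSet) (hf : f ∈ G.edgeSet) (hne : e ≠ f) {s t : ℝ}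
    (hs : s ∈ Ioo (0 : ℝ) 1) (ht : t ∈ Ioo (0 : ℝ) 1) : P.curve e s ≠ P.curve f t := by
  rw [P.curve_eq he, P.curve_eq hf]
  exact fun h => P.arc_disjoint ⟨e, he⟩ ⟨f, hf⟩ (fun h => hne (congrArg Subtype.val h)) s hs t ht
    (Complex.equivRealProdCLM.symm.injective h)

theorem mem_curve_cases (he : e ∈ G.edgeSet) {z : ℂ} (hz : z ∈ P.curve e '' Icc 0 1) :
    (∃ w ∈ e, z = P.pt w) ∨ ∃ t ∈ Ioo (0 : ℝ) 1, z = P.curve e t := by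
  obtain ⟨t, ht, rfl⟩ := hz
  obtain ⟨u, v, rfl, h0, h1⟩ := P.curve_ends he
  rcases eq_or_lt_of_le ht.1 with rfl | ht0
  · exact Or.inl ⟨u, by simp, h0⟩
  rcases eq_or_lt_of_le ht.2 with rfl | ht1
  · exact Or.inl ⟨v, by simp, h1⟩
  · exact Or.inr ⟨t, ⟨ht0, ht1⟩, rfl⟩

theorem mem_of_pt_mem_curve (he : e ∈ G.edgeSet) {w : V} (hw : P.pt w ∈ P.curve e '' Icc 0 1) :
    w ∈ e := by
  rcases P.mem_curve_cases he hw with ⟨w', hw', h⟩ | ⟨t, ht, h⟩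
  · rwa [P.pt_injective h]
  · exact absurd ⟨w, h⟩ (P.curve_avoid he ht)

theorem exists_of_mem_curve_inter (he : e ∈ G.edgeSet) (hf : f ∈ G.edgeSet) (hne : e ≠ f) {z : ℂ}
    (hz : z ∈ P.curve e '' Icc 0 1) (hz' : z ∈ P.curve f '' Icc 0 1) :
    ∃ w, w ∈ e ∧ w ∈ f ∧ z = P.pt w := by
  rcases P.mem_curve_cases he hz with ⟨w, hw, rfl⟩ | ⟨t, ht, rfl⟩
  · exact ⟨w, hw, P.mem_of_pt_mem_curve hf hz', rfl⟩
  rcases P.mem_curve_cases hf hz' with ⟨w, hw, h⟩ | ⟨s, hs, h⟩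
  · exact absurd ⟨w, h.symm⟩ (P.curve_avoid he ht)
  · exact absurd h (P.curve_ne he hf hne ht hs)

theorem drawing_insert : P.drawing (insert e S) = P.drawing S ∪ P.curve e '' Icc 0 1 := by
  rw [drawing, drawing, biUnion_insert, union_assoc, union_comm (P.curve e '' _)]

theorem drawing_empty : P.drawing ∅ = range P.pt := by simp [drawing]

theorem pt_mem_drawing (v : V) : P.pt v ∈ P.drawing S := Or.inl ⟨v, rfl⟩

theorem drawing_mono {T : Set (Sym2 V)} (h : S ⊆ T) : P.drawing S ⊆ P.drawing T :=
  union_subset_union_right _ (biUnion_subset_biUnion_left h)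

theorem curve_subset_drawing (he : e ∈ S) : P.curve e '' Icc 0 1 ⊆ P.drawing S :=
  (subset_biUnion_of_mem (u := fun e => P.curve e '' Icc 0 1) he).trans subset_union_right

theorem isEar (hS : S ⊆ G.edgeSet) (he : e ∈ G.edgeSet) (heS : e ∉ S) :
    IsEar (P.drawing S) (P.curve e) := by
  obtain ⟨u, v, -, h0, h1⟩ := P.curve_ends he
  refine ⟨P.continuousOn_curve he, P.injOn_curve he, h0 ▸ P.pt_mem_drawing u,
    h1 ▸ P.pt_mem_drawing v, ?_⟩
  rintro t ht (hm | hm)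
  · exact P.curve_avoid he ht hm
  · obtain ⟨f, hf, hm⟩ := mem_iUnion₂.1 hm
    obtain ⟨w, -, -, hw⟩ := P.exists_of_mem_curve_inter he (hS hf) (fun h => heS (h ▸ hf))
      (mem_image_of_mem _ (Ioo_subset_Icc_self ht)) hm
    exact P.curve_avoid he ht ⟨w, hw.symm⟩

theorem connectedComponentIn_eq_of_reachable (hS : S ⊆ G.edgeSet) {u v : V}
    (h : (fromEdgeSet S).Reachable u v) :
    connectedComponentIn (P.drawing S) (P.pt u) = connectedComponentIn (P.drawing S) (P.pt v) := by
  obtain ⟨p⟩ := h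
  induction p with
  | nil => rfl
  | @cons u v w huv p ih =>
    rw [← ih]
    have he : s(u, v) ∈ S := huv.1
    have hpre : IsPreconnected (P.curve s(u, v) '' Icc 0 1) :=
      isPreconnected_Icc.image _ (P.continuousOn_curve (hS he))
    have hmem : P.pt u ∈ P.curve s(u, v) '' Icc 0 1 ∧ P.pt v ∈ P.curve s(u, v) '' Icc 0 1 := by
      obtain ⟨a, b, hab, h0, h1⟩ := P.curve_ends (hS he)
      have ha : P.pt a ∈ P.curve s(u, v) '' Icc 0 1 := ⟨0, by simp, h0⟩
      have hb : P.pt b ∈ P.curve s(u, v) '' Icc 0 1 := ⟨1, by simp, h1⟩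
      rcases Sym2.eq_iff.1 hab with ⟨rfl, rfl⟩ | ⟨rfl, rfl⟩
      exacts [⟨ha, hb⟩, ⟨hb, ha⟩]
    exact connectedComponentIn_eq (hpre.subset_connectedComponentIn hmem.1
      (P.curve_subset_drawing he) hmem.2)

variable [Finite V]

theorem isCompact_drawing (hS : S ⊆ G.edgeSet) : IsCompact (P.drawing S) :=
  (finite_range _).isCompact.union ((Set.toFinite S).isCompact_biUnion fun _ he =>
    isCompact_Icc.image_of_continuousOn (P.continuousOn_curve (hS he)))

theorem connectedComponentIn_eq_of_not_reachable (hS : S ⊆ G.edgeSet) (he : e ∈ G.edgeSet)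
    (heS : e ∉ S) (hnr : ∀ u v, e = s(u, v) → ¬ (fromEdgeSet S).Reachable u v) {p q : ℂ}
    (hp : p ∉ P.drawing (insert e S)) (hq : q ∉ P.drawing (insert e S))
    (hpq : connectedComponentIn (P.drawing S)ᶜ p = connectedComponentIn (P.drawing S)ᶜ q) :
    connectedComponentIn (P.drawing (insert e S))ᶜ p =
      connectedComponentIn (P.drawing (insert e S))ᶜ q := by
  obtain ⟨u, v, huv, h0, h1⟩ := P.curve_ends he
  have hnuv := hnr u v huv
  set R : Set V := {w | (fromEdgeSet S).Reachable u w} with hR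
  have hedge : ∀ f ∈ S, ∀ a ∈ f, ∀ b ∈ f, a ∈ R → b ∈ R := by
    intro f hf a ha b hb haR
    by_cases hab : a = b
    · rwa [← hab]
    · rw [(Sym2.mem_and_mem_iff hab).1 ⟨ha, hb⟩] at hf
      exact haR.trans (Adj.reachable ⟨hf, hab⟩)
  set A : Set ℂ := P.pt '' R ∪ ⋃ f ∈ {f ∈ S | ∀ a ∈ f, a ∈ R}, P.curve f '' Icc 0 1 with hA
  set B : Set ℂ := P.pt '' Rᶜ ∪ ⋃ f ∈ {f ∈ S | ∀ a ∈ f, a ∉ R}, P.curve f '' Icc 0 1 with hB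
  have hAB : P.drawing S = A ∪ B := by
    ext z
    constructor
    · rintro (⟨w, rfl⟩ | hz)
      · by_cases hw : w ∈ R
        · exact Or.inl (Or.inl ⟨w, hw, rfl⟩)
        · exact Or.inr (Or.inl ⟨w, hw, rfl⟩)
      · obtain ⟨f, hf, hz⟩ := mem_iUnion₂.1 hz
        by_cases hfR : ∀ a ∈ f, a ∈ R
        · exact Or.inl (Or.inr (mem_iUnion₂.2 ⟨f, ⟨hf, hfR⟩, hz⟩))
        · push Not at hfR
          obtain ⟨a, haf, haR⟩ := hfR
          exact Or.inr (Or.inr (mem_iUnion₂.2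
            ⟨f, ⟨hf, fun b hb hbR => haR (hedge f hf b hb a haf hbR)⟩, hz⟩))
    · rintro ((⟨w, -, rfl⟩ | hz) | (⟨w, -, rfl⟩ | hz))
      · exact P.pt_mem_drawing w
      · obtain ⟨f, hf, hz⟩ := mem_iUnion₂.1 hz
        exact P.curve_subset_drawing hf.1 hz
      · exact P.pt_mem_drawing w
      · obtain ⟨f, hf, hz⟩ := mem_iUnion₂.1 hz
        exact P.curve_subset_drawing hf.1 hz
  have hdisj : Disjoint A B := by
    rw [Set.disjoint_left]
    rintro z (⟨w, hw, rfl⟩ | hz) (⟨w', hw', h⟩ | hz')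
    · exact hw' (P.pt_injective h ▸ hw)
    · obtain ⟨f, hf, hz'⟩ := mem_iUnion₂.1 hz'
      exact hf.2 w (P.mem_of_pt_mem_curve (hS hf.1) hz') hw
    · obtain ⟨f, hf, hz⟩ := mem_iUnion₂.1 hz
      exact hw' (hf.2 w' (P.mem_of_pt_mem_curve (hS hf.1) (h ▸ hz)))
    · obtain ⟨f, hf, hz⟩ := mem_iUnion₂.1 hz
      obtain ⟨f', hf', hz'⟩ := mem_iUnion₂.1 hz'
      have hne : f ≠ f' := by
        rintro rfl
        induction f with | h a b =>
        exact hf'.2 a (by simp) (hf.2 a (by simp))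
      obtain ⟨w, hw, hw', -⟩ := P.exists_of_mem_curve_inter (hS hf.1) (hS hf'.1) hne hz hz'
      exact hf'.2 w hw' (hf.2 w hw)
  have hcomp : ∀ (X : Set V) (T : Set (Sym2 V)), T ⊆ S →
      IsCompact (P.pt '' X ∪ ⋃ f ∈ T, P.curve f '' Icc 0 1) := fun X T hT =>
    (X.toFinite.image _).isCompact.union ((Set.toFinite T).isCompact_biUnion fun _ he =>
      isCompact_Icc.image_of_continuousOn (P.continuousOn_curve (hS (hT he))))
  have hear := P.isEar hS he heS
  rw [P.drawing_insert] at hp hq ⊢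
  rw [hAB] at hear hpq hp hq ⊢
  exact hear.connectedComponentIn_eq_of_disjoint (hcomp _ _ (sep_subset _ _))
    (hcomp _ _ (sep_subset _ _)) hdisj (h0 ▸ Or.inl ⟨u, Reachable.refl u, rfl⟩)
    (h1 ▸ Or.inl ⟨v, hnuv, rfl⟩) hp hq hpq

theorem compl_range_pt_isPreconnected : IsPreconnected (range P.pt)ᶜ :=
  ((finite_range P.pt).countable.isPathConnected_compl_of_one_lt_rank (by
    rw [Complex.rank_real_complex]; norm_num)).isConnected.isPreconnected

theorem connectedComponentIn_eq_of_isAcyclic (hS : S ⊆ G.edgeSet)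
    (hac : (fromEdgeSet S).IsAcyclic) {p q : ℂ} (hp : p ∉ P.drawing S) (hq : q ∉ P.drawing S) :
    connectedComponentIn (P.drawing S)ᶜ p = connectedComponentIn (P.drawing S)ᶜ q := by
  induction S, Set.toFinite S using Set.Finite.induction_on with
  | empty =>
    rw [drawing_empty] at *
    exact connectedComponentIn_eq (P.compl_range_pt_isPreconnected.subset_connectedComponentIn hp
      Subset.rfl hq)
  | @insert e S heS _ ih =>
    have he : e ∈ G.edgeSet := hS (mem_insert _ _)
    have hSG : S ⊆ G.edgeSet := (subset_insert _ _).trans hS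
    refine P.connectedComponentIn_eq_of_not_reachable hSG he heS ?_ hp hq
      (ih hSG (hac.anti (fromEdgeSet_mono (subset_insert _ _)))
        (fun h => hp (P.drawing_mono (subset_insert _ _) h))
        (fun h => hq (P.drawing_mono (subset_insert _ _) h)))
    rintro u v rfl
    have := isAcyclic_iff_forall_adj_isBridge.1 hac (v := u) (w := v) ⟨mem_insert _ _, he.ne⟩
    rwa [isBridge_iff, fromEdgeSet_insert_deleteEdges heS] at this

theorem finite_planeFaces (hS : S ⊆ G.edgeSet) : (planeFaces (P.drawing S)).Finite := by
  induction S, Set.toFinite S using Set.Finite.induction_on with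
  | empty =>
    refine Set.Subsingleton.finite ?_
    rintro _ ⟨p, hp, rfl⟩ _ ⟨q, hq, rfl⟩
    exact P.connectedComponentIn_eq_of_isAcyclic hS (by simp) hp hq
  | @insert e S heS _ ih =>
    have hSG : S ⊆ G.edgeSet := (subset_insert _ _).trans hS
    rw [P.drawing_insert]
    exact (P.isEar hSG (hS (mem_insert _ _)) heS).finite_planeFaces (P.isCompact_drawing hSG)
      (ih hSG)

end PlaneEmbedding

theorem SimpleGraph.edgeSet_fromEdgeSet_of_subset {V : Type*} {G : SimpleGraph V}
    {S : Set (Sym2 V)} (hS : S ⊆ G.edgeSet) : (fromEdgeSet S).edgeSet = S := by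
  rw [edgeSet_fromEdgeSet]
  refine sdiff_eq_left.2 (Set.disjoint_left.2 fun e he hd => ?_)
  exact G.not_isDiag_of_mem_edgeSet (hS he) hd

/-- A finite graph containing a cycle has at least as many edges as its girth. -/
theorem SimpleGraph.le_ncard_edgeSet_of_not_isAcyclic {V : Type*} [Finite V] {H : SimpleGraph V}
    {g : ℕ} (hg : (g : ℕ∞) ≤ H.egirth) (hac : ¬ H.IsAcyclic) : g ≤ H.edgeSet.ncard := by
  classical
  rw [IsAcyclic] at hac
  push Not at hac
  obtain ⟨v, c, hc⟩ := hac
  have h1 : g ≤ c.length := by exact_mod_cast hg.trans (egirth_le_length hc)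
  refine h1.trans ?_
  rw [← c.length_edges, ← List.toFinset_card_of_nodup hc.edges_nodup, ← Set.ncard_coe_finset]
  refine Set.ncard_le_ncard (fun e he => ?_) (Set.toFinite _)
  exact c.edges_subset_edgeSet (by simpa using he)

namespace PlaneEmbedding

open Set

variable {V : Type*} [Finite V] {G : SimpleGraph V} (P : PlaneEmbedding G) {S : Set (Sym2 V)}

theorem one_le_ncard_planeFaces (hS : S ⊆ G.edgeSet) :
    1 ≤ (planeFaces (P.drawing S)).ncard := by
  obtain ⟨z, hz⟩ := nonempty_compl.2 (P.isCompact_drawing hS).ne_univ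
  exact (Set.ncard_pos (P.finite_planeFaces hS)).2 ⟨_, z, hz, rfl⟩

theorem exists_ncard_planeFaces_add_one_le (hS : S ⊆ G.edgeSet)
    (hac : ¬ (fromEdgeSet S).IsAcyclic) :
    ∃ e ∈ S, (planeFaces (P.drawing (S \ {e}))).ncard + 1 ≤ (planeFaces (P.drawing S)).ncard := by
  rw [isAcyclic_iff_forall_adj_isBridge] at hac
  push Not at hac
  obtain ⟨u, v, huv, hb⟩ := hac
  have he : s(u, v) ∈ S := huv.1
  have hS' : S \ {s(u, v)} ⊆ G.edgeSet := sdiff_subset.trans hS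
  have heS' : s(u, v) ∉ S \ {s(u, v)} := fun h => h.2 rfl
  have hins : insert s(u, v) (S \ {s(u, v)}) = S := by
    rw [insert_sdiff_singleton, insert_eq_of_mem he]
  refine ⟨s(u, v), he, ?_⟩
  rw [isBridge_iff, not_not, ← hins, fromEdgeSet_insert_deleteEdges heS'] at hb
  have hcomp := P.connectedComponentIn_eq_of_reachable hS' hb
  obtain ⟨a, b, hab, h0, h1⟩ := P.curve_ends (hS he)
  have hmem : ∀ w ∈ s(u, v), P.pt w ∈
      connectedComponentIn (P.drawing (S \ {s(u, v)})) (P.pt u) := by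
    intro w hw
    rcases Sym2.mem_iff.1 hw with rfl | rfl
    · exact mem_connectedComponentIn (P.pt_mem_drawing _)
    · rw [hcomp]; exact mem_connectedComponentIn (P.pt_mem_drawing _)
  have := (P.isEar hS' (hS he) heS').ncard_planeFaces_add_one_le (P.isCompact_drawing hS')
    (P.finite_planeFaces hS') isPreconnected_connectedComponentIn (connectedComponentIn_subset _ _)
    (h0 ▸ hmem a (by simp [hab])) (h1 ▸ hmem b (by simp [hab]))
  rwa [← P.drawing_insert, hins] at this

theorem two_le_ncard_planeFaces (hS : S ⊆ G.edgeSet) (hac : ¬ (fromEdgeSet S).IsAcyclic) :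
    2 ≤ (planeFaces (P.drawing S)).ncard := by
  obtain ⟨e, -, h⟩ := P.exists_ncard_planeFaces_add_one_le hS hac
  have := P.one_le_ncard_planeFaces (sdiff_subset.trans hS : S \ {e} ⊆ _)
  omega

/-- One inequality of Euler's formula. -/
theorem ncard_add_one_le (hS : S ⊆ G.edgeSet) {W : Finset V} (hW : W.Nonempty)
    (hsup : ∀ e ∈ S, ∀ u ∈ e, u ∈ W) :
    S.ncard + 1 ≤ (planeFaces (P.drawing S)).ncard + W.card := by
  induction hn : S.ncard generalizing S with
  | zero => have := P.one_le_ncard_planeFaces hS; omega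
  | succ n ih =>
    by_cases hac : (fromEdgeSet S).IsAcyclic
    · have h1 := hac.ncard_edgeSet_add_one_le hW
        (fun u v h => hsup _ ((fromEdgeSet_adj S).1 h).1 u (by simp))
      rw [edgeSet_fromEdgeSet_of_subset hS] at h1
      omega
    · obtain ⟨e, he, h⟩ := P.exists_ncard_planeFaces_add_one_le hS hac
      have hcard := Set.ncard_sdiff_singleton_add_one he
      have := ih (S := S \ {e}) (sdiff_subset.trans hS) (fun f hf => hsup f hf.1) (by omega)
      omega

/-- The edges bordering a face already bound it on their own. -/
theorem mem_planeFaces_boundary (hS : S ⊆ G.edgeSet) {F : Set ℂ}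
    (hF : F ∈ planeFaces (P.drawing S)) :
    F ∈ planeFaces (P.drawing {e ∈ S | F ∉ planeFaces (P.drawing (S \ {e}))}) := by
  refine mem_planeFaces_of_frontier_subset (P.drawing_mono (sep_subset _ _)) hF fun z hz => ?_
  have hz' := frontier_subset_of_mem_planeFaces (P.isCompact_drawing hS).isClosed hF hz
  rcases hz' with hz' | hz'
  · exact Or.inl hz'
  obtain ⟨f, hf, hzf⟩ := mem_iUnion₂.1 hz'
  by_cases hfB : F ∈ planeFaces (P.drawing (S \ {f}))
  · have hS' : S \ {f} ⊆ G.edgeSet := sdiff_subset.trans hS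
    rcases frontier_subset_of_mem_planeFaces (P.isCompact_drawing hS').isClosed hfB hz with h | h
    · exact Or.inl h
    · obtain ⟨f', hf', hzf'⟩ := mem_iUnion₂.1 h
      obtain ⟨w, -, -, rfl⟩ := P.exists_of_mem_curve_inter (hS hf) (hS hf'.1) (Ne.symm hf'.2)
        hzf hzf'
      exact P.pt_mem_drawing w
  · refine P.curve_subset_drawing (e := f) ?_ hzf
    exact ⟨hf, hfB⟩

theorem le_ncard_boundary (hS : S ⊆ G.edgeSet) {g : ℕ} (hg : (g : ℕ∞) ≤ (fromEdgeSet S).egirth)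
    (hac : ¬ (fromEdgeSet S).IsAcyclic) {F : Set ℂ} (hF : F ∈ planeFaces (P.drawing S)) :
    g ≤ {e ∈ S | F ∉ planeFaces (P.drawing (S \ {e}))}.ncard := by
  set B := {e ∈ S | F ∉ planeFaces (P.drawing (S \ {e}))} with hB
  have hBS : B ⊆ S := sep_subset _ _
  have hFB := P.mem_planeFaces_boundary hS hF
  rw [← edgeSet_fromEdgeSet_of_subset (hBS.trans hS)]
  refine le_ncard_edgeSet_of_not_isAcyclic (hg.trans (egirth_anti (fromEdgeSet_mono hBS))) ?_
  intro hacB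
  have h2 := P.two_le_ncard_planeFaces hS hac
  have h1 : (planeFaces (P.drawing S)).ncard ≤ 1 := by
    rw [← Set.ncard_singleton F]
    refine Set.ncard_le_ncard ?_ (Set.toFinite _)
    intro F' hF'
    obtain ⟨q, hq⟩ := planeFaces_nonempty hF'
    obtain ⟨p, hp⟩ := planeFaces_nonempty hFB
    have hqS := planeFaces_subset_compl hF' hq
    have : connectedComponentIn (P.drawing B)ᶜ p = connectedComponentIn (P.drawing B)ᶜ q :=
      P.connectedComponentIn_eq_of_isAcyclic (hBS.trans hS) hacB
        (planeFaces_subset_compl hFB hp) (fun h => hqS (P.drawing_mono hBS h))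
    have hqF : q ∈ F := by
      rw [planeFaces_eq hFB hp, this]
      exact mem_connectedComponentIn fun h => hqS (P.drawing_mono hBS h)
    rw [mem_singleton_iff, planeFaces_eq hF hqF, planeFaces_eq hF' hq]
  omega

theorem mul_ncard_planeFaces_le (hS : S ⊆ G.edgeSet) {g : ℕ}
    (hg : (g : ℕ∞) ≤ (fromEdgeSet S).egirth) (hac : ¬ (fromEdgeSet S).IsAcyclic) :
    g * (planeFaces (P.drawing S)).ncard ≤ 2 * S.ncard := by
  classical
  have hfin := P.finite_planeFaces hS
  have hSfin := S.toFinite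
  rw [Set.ncard_eq_toFinset_card _ hfin, Set.ncard_eq_toFinset_card _ hSfin, mul_comm g,
    mul_comm 2]
  refine Finset.card_mul_le_card_mul (fun F e => F ∉ planeFaces (P.drawing (S \ {e})))
    (fun F hF => ?_) (fun e he => ?_)
  · refine (P.le_ncard_boundary hS hg hac (hfin.mem_toFinset.1 hF)).trans (le_of_eq ?_)
    rw [← Set.ncard_coe_finset]
    congr 1
    ext e
    simp [Finset.bipartiteAbove]
  · have heS : e ∈ S := hSfin.mem_toFinset.1 he
    have hS' : S \ {e} ⊆ G.edgeSet := sdiff_subset.trans hS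
    have := (P.isEar hS' (hS heS) (fun h => h.2 rfl)).encard_planeFaces_sdiff_le
      (P.isCompact_drawing hS')
    rw [← P.drawing_insert, insert_sdiff_singleton, insert_eq_of_mem heS] at this
    rw [← Nat.cast_le (α := ℕ∞), ← Set.encard_coe_eq_coe_finsetCard]
    refine le_trans (le_of_eq ?_) this
    congr 1
    ext F
    simp [Finset.bipartiteBelow]

end PlaneEmbedding

/-- Density of planar graphs of given girth, with truncated division avoided. -/
theorem SimpleGraph.IsPlanar.mul_ncard_edgeSet_le {V : Type*} [Finite V] {G H : SimpleGraph V}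
    (hG : G.IsPlanar) (hle : H ≤ G) {g : ℕ} (hg : (g : ℕ∞) ≤ H.egirth) {W : Finset V}
    (hW : W.Nonempty) (hsup : ∀ u v, H.Adj u v → u ∈ W) :
    g * (H.edgeSet.ncard + 1) ≤ g * W.card + 2 * H.edgeSet.ncard := by
  obtain ⟨P⟩ := hG
  have hS : H.edgeSet ⊆ G.edgeSet := edgeSet_subset_edgeSet.2 hle
  by_cases hac : H.IsAcyclic
  · have := Nat.mul_le_mul_left g (hac.ncard_edgeSet_add_one_le hW hsup)
    omega
  · have h1 := P.mul_ncard_planeFaces_le hS (g := g) (by rwa [fromEdgeSet_edgeSet])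
      (by rwa [fromEdgeSet_edgeSet])
    have h2 := Nat.mul_le_mul_left g (P.ncard_add_one_le hS hW (fun e he u hu => by
      obtain ⟨v, rfl⟩ := Sym2.mem_iff_exists.1 hu
      exact hsup u v he))
    rw [mul_add g (planeFaces _).ncard] at h2
    omega

theorem SimpleGraph.egirth_between_of_odd {V : Type*} {H : SimpleGraph V} {s t : Set V}
    (hst : Disjoint s t) {g : ℕ} (hodd : Odd g) (hg : (g : ℕ∞) ≤ (H.between s t).egirth) :
    ((g + 1 : ℕ) : ℕ∞) ≤ (H.between s t).egirth := by
  rw [le_egirth] at hg ⊢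
  intro a c hc
  have h1 : g ≤ c.length := by exact_mod_cast hg a c hc
  have h2 : Even c.length := two_colorable_iff_forall_loop_even.1
    (IsBipartiteWith.isBipartite (between_isBipartiteWith hst)) a c
  have h3 : g ≠ c.length := by rintro rfl; exact Nat.not_even_iff_odd.2 hodd h2
  exact_mod_cast lt_of_le_of_ne h1 h3

/-- The density bound for the edges leaving a set `M` of vertices all of whose neighbours lie
in a set `W` disjoint from `M`. -/
theorem SimpleGraph.IsPlanar.mul_sum_degree_le {V : Type*} [Fintype V] [DecidableEq V]
    {G H : SimpleGraph V} [DecidableRel H.Adj] (hG : G.IsPlanar) (hle : H ≤ G) {M W : Finset V}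
    (hM : M.Nonempty) (hMW : Disjoint M W) (hN : ∀ m ∈ M, ∀ y, H.Adj m y → y ∈ W) {g : ℕ}
    (hg : (g : ℕ∞) ≤ (H.between M W).egirth) :
    g * (∑ m ∈ M, H.degree m + 1) ≤ g * (M.card + W.card) + 2 * ∑ m ∈ M, H.degree m := by
  classical
  have hb : (H.between M W).IsBipartiteWith M W :=
    between_isBipartiteWith (Finset.disjoint_coe.2 hMW)
  have hE : (H.between M W).edgeSet.ncard = ∑ m ∈ M, H.degree m := by
    rw [← coe_edgeFinset, Set.ncard_coe_finset, ← isBipartiteWith_sum_degrees_eq_card_edges hb]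
    refine Finset.sum_congr rfl fun m hm => ?_
    rw [← card_neighborFinset_eq_degree, ← card_neighborFinset_eq_degree]
    congr 1
    ext y
    have := hN m hm y
    simp only [mem_neighborFinset, between_adj, Finset.mem_coe]
    tauto
  have := hG.mul_ncard_edgeSet_le (between_le.trans hle) hg (W := M ∪ W)
    (hM.mono Finset.subset_union_left) (fun u v huv => by
      have := between_adj.1 huv
      simp only [Finset.mem_coe] at this
      rw [Finset.mem_union]
      tauto)
  rwa [hE, Finset.card_union_of_disjoint hMW] at this

namespace SimpleGraph

variable {V : Type*} [Fintype V]

section Definitions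

variable (H : SimpleGraph V) [DecidableRel H.Adj] (D : ℕ)

/-- A vertex of degree two whose neighbours have total degree at most `D`. -/
def IsLight (v : V) : Prop := H.degree v = 2 ∧ ∑ y ∈ H.neighborFinset v, H.degree y ≤ D

instance : DecidablePred (H.IsLight D) := fun v =>
  inferInstanceAs (Decidable (H.degree v = 2 ∧ ∑ y ∈ H.neighborFinset v, H.degree y ≤ D))

/-- The degree of a vertex, where light vertices count as if they were leaves. -/
def reducedDegree (v : V) : ℕ := if H.IsLight D v then 1 else H.degree v

/-- The configurations that do not occur in an edge-minimal graph without a `1`-frugal colouring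
with `D + 1` colours. -/
structure IsReduced : Prop where
  degree_ne_one : ∀ v, H.degree v ≠ 1
  lt_sum_reducedDegree : ∀ v u, H.IsLight D v → H.Adj v u →
    D < ∑ y ∈ H.neighborFinset u, H.reducedDegree D y
  not_octagon : ∀ x w₁ v₁ u₁ y u₂ v₂ w₂, [x, w₁, v₁, u₁, y, u₂, v₂, w₂].Nodup →
    H.Adj x w₁ → H.Adj w₁ v₁ → H.Adj v₁ u₁ → H.Adj u₁ y →
    H.Adj y u₂ → H.Adj u₂ v₂ → H.Adj v₂ w₂ → H.Adj w₂ x →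
    H.IsLight D v₁ → H.IsLight D v₂ → H.degree w₁ = 2 → H.degree u₁ = 2 →
    H.degree w₂ = 2 → H.degree u₂ = 2 → False

/-- Vertices whose degree is maximal or one less. -/
def bigVerts : Finset V := {v | D ≤ H.degree v + 1}

/-- Light vertices with both neighbours of degree two. -/
def middleVerts : Finset V := {v | H.IsLight D v ∧ ∀ u ∈ H.neighborFinset v, H.degree u = 2}

variable [DecidableEq V]

/-- Light neighbours of `u` whose other neighbour has degree two. -/
def poorNeighbors (u : V) : Finset V :=
  {v ∈ H.neighborFinset u | H.IsLight D v ∧ ∃ w ∈ H.neighborFinset v, w ≠ u ∧ H.degree w = 2}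

/-- Vertices of degree three with two poor neighbours. -/
def tightVerts : Finset V := {u | H.degree u = 3 ∧ (H.poorNeighbors D u).card = 2}

end Definitions

variable {H : SimpleGraph V} [DecidableRel H.Adj] {D : ℕ}

theorem mem_bigVerts {v : V} : v ∈ H.bigVerts D ↔ D ≤ H.degree v + 1 := by simp [bigVerts]

theorem mem_middleVerts {v : V} :
    v ∈ H.middleVerts D ↔ H.IsLight D v ∧ ∀ u ∈ H.neighborFinset v, H.degree u = 2 := by
  simp [middleVerts]

theorem exists_adj_ne_of_degree_eq_two {u : V} (hu : H.degree u = 2) (a : V) :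
    ∃ b, H.Adj u b ∧ a ≠ b := by
  have h1 : 1 < (H.neighborFinset u).card := by rw [card_neighborFinset_eq_degree, hu]; omega
  obtain ⟨b, hb, hne⟩ := Finset.exists_mem_ne h1 a
  exact ⟨b, (H.mem_neighborFinset _ _).1 hb, hne.symm⟩

theorem IsLight.reducedDegree_eq {v : V} (hv : H.IsLight D v) : H.reducedDegree D v = 1 := if_pos hv

theorem reducedDegree_le {v : V} : H.reducedDegree D v ≤ H.degree v := by
  rw [reducedDegree]
  split_ifs with h
  · rw [h.1]; omega
  · exact le_rfl

theorem not_isLight_of_le (hD : 192 ≤ D) {x : V} (h : D ≤ H.degree x + 1) : ¬ H.IsLight D x :=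
  fun hx => by
    have := hx.1
    omega

theorem IsReduced.not_isLight (hR : H.IsReduced D) {u v : V} (hv : H.IsLight D v)
    (huv : H.Adj v u) : ¬ H.IsLight D u := fun hu =>
  (hR.lt_sum_reducedDegree v u hv huv).not_ge
    ((Finset.sum_le_sum fun _ _ => reducedDegree_le).trans hu.2)

variable [DecidableEq V]

theorem mem_poorNeighbors {u v : V} : v ∈ H.poorNeighbors D u ↔
    H.Adj u v ∧ H.IsLight D v ∧ ∃ w, H.Adj v w ∧ w ≠ u ∧ H.degree w = 2 := by
  simp [poorNeighbors]

theorem mem_tightVerts {u : V} :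
    u ∈ H.tightVerts D ↔ H.degree u = 3 ∧ (H.poorNeighbors D u).card = 2 := by
  simp [tightVerts]

theorem eq_of_degree_eq_two {u a b y : V} (hu : H.degree u = 2) (ha : H.Adj u a) (hb : H.Adj u b)
    (hab : a ≠ b) (hy : H.Adj u y) : y = a ∨ y = b := by
  by_contra! h
  have : ({y, a, b} : Finset V) ⊆ H.neighborFinset u := by
    intro z hz
    simp only [Finset.mem_insert, Finset.mem_singleton] at hz
    rw [mem_neighborFinset]
    rcases hz with rfl | rfl | rfl <;> assumption
  have h3 := Finset.card_le_card this
  rw [Finset.card_eq_three.2 ⟨y, a, b, h.1, h.2, hab, rfl⟩, card_neighborFinset_eq_degree, hu] at h3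
  omega

theorem neighborFinset_of_degree_eq_two {u a b : V} (hu : H.degree u = 2) (ha : H.Adj u a)
    (hb : H.Adj u b) (hab : a ≠ b) : H.neighborFinset u = {a, b} := by
  ext y
  rw [mem_neighborFinset, Finset.mem_insert, Finset.mem_singleton]
  exact ⟨eq_of_degree_eq_two hu ha hb hab, by rintro (rfl | rfl) <;> assumption⟩

namespace IsReduced

variable (hR : H.IsReduced D)
include hR

theorem le_degree {u v x : V} (hv : H.IsLight D v) (huv : H.Adj u v) (hu : H.degree u = 2)
    (hux : H.Adj u x) (hxv : x ≠ v) : D ≤ H.degree x := by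
  have h := hR.lt_sum_reducedDegree v u hv huv.symm
  rw [neighborFinset_of_degree_eq_two hu huv hux hxv.symm, Finset.sum_pair hxv.symm,
    hv.reducedDegree_eq] at h
  have := reducedDegree_le (H := H) (D := D) (v := x)
  omega

variable (hD : 192 ≤ D)
include hD

theorem not_cycle_eight (f : Fin 8 → V) (hf : Function.Injective f)
    (hadj : ∀ i, H.Adj (f i) (f (i + 1)))
    (hM : ∀ i, f (2 * i) ∈ (H.middleVerts D).biUnion fun v => H.neighborFinset v)
    (h1 : f 1 ∈ H.middleVerts D) : False := by
  have hM' : ∀ i, ∃ v ∈ H.middleVerts D, H.Adj (f (2 * i)) v := fun i => by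
    obtain ⟨v, hv, h⟩ := Finset.mem_biUnion.1 (hM i)
    exact ⟨v, hv, ((H.mem_neighborFinset _ _).1 h).symm⟩
  have hM2 : ∀ i, H.degree (f (2 * i)) = 2 := fun i => by
    obtain ⟨v, hv, h⟩ := hM' i
    exact (mem_middleVerts.1 hv).2 _ ((H.mem_neighborFinset _ _).2 h.symm)
  have hne : ∀ i j, i ≠ j → f i ≠ f j := fun i j => hf.ne
  have hl1 := (mem_middleVerts.1 h1).1
  have h3 : D ≤ H.degree (f 3) := hR.le_degree hl1 (hadj 1).symm (hM2 1) (hadj 2)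
    (hne _ _ (by decide))
  have h5 : f 5 ∈ H.middleVerts D := by
    obtain ⟨v, hv, h⟩ := hM' 2
    rcases eq_of_degree_eq_two (hM2 2) (hadj 3).symm (hadj 4) (hne _ _ (by decide)) h with rfl | rfl
    · exact absurd (mem_middleVerts.1 hv).1 (not_isLight_of_le hD (by omega))
    · exact hv
  refine hR.not_octagon (f 7) (f 0) (f 1) (f 2) (f 3) (f 4) (f 5) (f 6) ?_ (hadj 7) (hadj 0)
    (hadj 1) (hadj 2) (hadj 3) (hadj 4) (hadj 5) (hadj 6) hl1 (mem_middleVerts.1 h5).1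
    (hM2 0) (hM2 1) (hM2 3) (hM2 2)
  exact List.Nodup.map hf (l := [7, 0, 1, 2, 3, 4, 5, 6]) (by decide)

variable {G : SimpleGraph V} (hG : G.IsPlanar) (hle : H ≤ G) (hg : (7 : ℕ∞) ≤ G.egirth)
include hG hle hg

theorem card_middleVerts_le : (H.middleVerts D).card ≤ 9 * (H.bigVerts D).card := by
  set p := H.middleVerts D with hp
  set M := p.biUnion fun v => H.neighborFinset v with hMdef
  have hM : ∀ m ∈ M, H.degree m = 2 ∧ ∃ v ∈ p, H.Adj m v := fun m hm => by
    obtain ⟨v, hv, h⟩ := Finset.mem_biUnion.1 hm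
    exact ⟨(mem_middleVerts.1 hv).2 _ h, v, hv, ((H.mem_neighborFinset _ _).1 h).symm⟩
  have hlight : ∀ v ∈ p, H.IsLight D v := fun v hv => (mem_middleVerts.1 hv).1
  have hpM : p.card * 2 ≤ M.card * 1 := by
    refine Finset.card_mul_le_card_mul H.Adj (fun v hv => ?_) (fun m hm => ?_)
    · rw [← (hlight v hv).1, ← card_neighborFinset_eq_degree]
      refine Finset.card_le_card fun u hu => ?_
      rw [Finset.mem_bipartiteAbove]
      exact ⟨Finset.mem_biUnion.2 ⟨v, hv, hu⟩, (H.mem_neighborFinset _ _).1 hu⟩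
    · rw [Finset.card_le_one]
      intro a ha b hb
      rw [Finset.mem_bipartiteBelow] at ha hb
      by_contra hab
      have := hR.le_degree (hlight a ha.1) ha.2.symm (hM m hm).1 hb.2.symm (Ne.symm hab)
      exact not_isLight_of_le hD (by omega) (hlight b hb.1)
  rcases M.eq_empty_or_nonempty with hM0 | hMne
  · rw [hM0, Finset.card_empty] at hpM
    omega
  have hnotbig : ∀ m ∈ M, m ∉ H.bigVerts D := fun m hm h => by
    have := (hM m hm).1
    rw [mem_bigVerts] at h
    omega
  have hnotp : ∀ m ∈ M, m ∉ p := fun m hm h => by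
    obtain ⟨-, v, hv, hadj⟩ := hM m hm
    exact hR.not_isLight (hlight v hv) hadj.symm (hlight m h)
  have hdisj : Disjoint M (p ∪ H.bigVerts D) := by
    rw [Finset.disjoint_left]
    intro m hm h
    exact (Finset.mem_union.1 h).elim (hnotp m hm) (hnotbig m hm)
  have hN : ∀ m ∈ M, ∀ y, H.Adj m y → y ∈ p ∪ H.bigVerts D := fun m hm y hy => by
    obtain ⟨hm2, v, hv, hadj⟩ := hM m hm
    rw [Finset.mem_union, mem_bigVerts]
    by_cases hyv : y = v
    · exact Or.inl (hyv ▸ hv)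
    · have := hR.le_degree (hlight v hv) hadj hm2 hy hyv
      exact Or.inr (by omega)
  have hg8 := egirth_between_of_odd (H := H) (Finset.disjoint_coe.2 hdisj) (g := 7) (by decide)
    (hg.trans (egirth_anti (between_le.trans hle)))
  have hg9 : ((9 : ℕ) : ℕ∞) ≤ (H.between M (p ∪ H.bigVerts D : Finset V)).egirth := by
    rw [le_egirth] at hg8 ⊢
    intro a c hc
    have h8 : 8 ≤ c.length := by exact_mod_cast hg8 a c hc
    suffices h : c.length ≠ 8 by
      have : 9 ≤ c.length := by omega
      exact_mod_cast this
    intro hlen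
    obtain ⟨⟨f, hf⟩⟩ := (cycleGraph_isContained_iff (by norm_num)).2 ⟨a, c, hc, hlen⟩
    have hadj : ∀ i, (H.between M (p ∪ H.bigVerts D : Finset V)).Adj (f i) (f (i + 1)) :=
      fun i => f.map_rel (show (cycleGraph (6 + 2)).Adj i (i + 1) by
        rw [cycleGraph_adj]; right; simp)
    have key : ∀ h : Fin 8 → V, Function.Injective h →
        (∀ i, (H.between M (p ∪ H.bigVerts D : Finset V)).Adj (h i) (h (i + 1))) →
        h 0 ∈ M → False := by
      intro h hinj hh h0
      have hstep : ∀ i, h i ∈ M → h (i + 2) ∈ M := fun i hi => by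
        rw [show i + 2 = i + 1 + 1 from (add_assoc i 1 1).symm]
        rcases (hh i).2 with h' | h'
        · rcases (hh (i + 1)).2 with h'' | h''
          · exact absurd h'.2 (Finset.disjoint_left.1 hdisj h''.1)
          · exact h''.2
        · exact absurd h'.1 (Finset.disjoint_left.1 hdisj hi)
      have h2 := hstep 0 h0
      have h4 := hstep 2 h2
      have h6 := hstep 4 h4
      have heven : ∀ i : Fin 8, h (2 * i) ∈ M := by
        intro i
        fin_cases i
        exacts [h0, h2, h4, h6, h0, h2, h4, h6]
      obtain ⟨h2d, v, hv, hv2⟩ := hM _ h2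
      rcases eq_of_degree_eq_two h2d (hh 1).1.symm (hh 2).1 (hinj.ne (by decide)) hv2 with rfl | rfl
      · exact hR.not_cycle_eight hD h hinj (fun i => (hh i).1) heven hv
      · refine hR.not_cycle_eight hD (fun i => h (i + 2)) (hinj.comp (add_left_injective 2))
          (fun i => ?_) (fun i => ?_) hv
        · rw [add_right_comm]; exact (hh (i + 2)).1
        · exact hstep _ (heven i)
    rcases (hadj 0).2 with h | h
    · exact key f hf hadj h.1
    · exact key (fun i => f (i + 1)) (hf.comp (add_left_injective 1))
        (fun i => hadj (i + 1)) h.2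
  have hmain := hG.mul_sum_degree_le hle hMne hdisj hN hg9
  rw [Finset.sum_congr rfl fun m hm => (hM m hm).1, Finset.sum_const, smul_eq_mul] at hmain
  have := Finset.card_union_le p (H.bigVerts D)
  omega

end IsReduced

end SimpleGraph

namespace SimpleGraph

namespace IsReduced

variable {V : Type*} [Fintype V] [DecidableEq V] {H : SimpleGraph V} [DecidableRel H.Adj] {D : ℕ}

variable (hR : H.IsReduced D)
include hR

theorem le_degree_of_mem_tightVerts {u y : V} (hu : u ∈ H.tightVerts D) (hy : H.Adj u y)
    (hyp : y ∉ H.poorNeighbors D u) : D ≤ H.degree y + 1 := by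
  obtain ⟨hu3, hcard⟩ := mem_tightVerts.1 hu
  have hsub : H.poorNeighbors D u ⊆ H.neighborFinset u := Finset.filter_subset _ _
  obtain ⟨v, hv⟩ : (H.poorNeighbors D u).Nonempty := Finset.card_pos.1 (by omega)
  have hlt := hR.lt_sum_reducedDegree v u (mem_poorNeighbors.1 hv).2.1 (mem_poorNeighbors.1 hv).1.symm
  rw [← Finset.sum_sdiff hsub, Finset.sum_congr rfl fun x hx =>
    (mem_poorNeighbors.1 hx).2.1.reducedDegree_eq, Finset.sum_const, hcard] at hlt
  have hc1 : (H.neighborFinset u \ H.poorNeighbors D u).card = 1 := by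
    rw [Finset.card_sdiff_of_subset hsub, card_neighborFinset_eq_degree]
    omega
  obtain ⟨z, hz⟩ := Finset.card_eq_one.1 hc1
  have hyz : y ∈ H.neighborFinset u \ H.poorNeighbors D u := by simp [hy, hyp]
  rw [hz, Finset.mem_singleton] at hyz
  rw [hz, Finset.sum_singleton, ← hyz] at hlt
  have := reducedDegree_le (H := H) (D := D) (v := y)
  simp only [smul_eq_mul] at hlt
  omega

variable (hD : 192 ≤ D) {G : SimpleGraph V} (hG : G.IsPlanar) (hle : H ≤ G)
  (hg : (7 : ℕ∞) ≤ G.egirth)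
include hD hG hle hg

theorem card_tightVerts_le : (H.tightVerts D).card ≤ 4 * (H.bigVerts D).card := by
  set T := H.tightVerts D with hT
  set Q := T.biUnion (H.poorNeighbors D) with hQdef
  set E := (Q.biUnion fun v => H.neighborFinset v).filter fun w => H.degree w = 2 with hEdef
  have hQ : ∀ v ∈ Q, H.IsLight D v ∧ ∃ w ∈ E, H.Adj v w := fun v hv => by
    obtain ⟨u, -, h⟩ := Finset.mem_biUnion.1 hv
    obtain ⟨-, hl, w, hw, -, hw2⟩ := mem_poorNeighbors.1 h
    exact ⟨hl, w, Finset.mem_filter.2 ⟨Finset.mem_biUnion.2 ⟨v, hv, by simpa using hw⟩, hw2⟩, hw⟩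
  have hE : ∀ w ∈ E, H.degree w = 2 ∧ ∃ v ∈ Q, H.Adj w v := fun w hw => by
    obtain ⟨h, hw2⟩ := Finset.mem_filter.1 hw
    obtain ⟨v, hv, h⟩ := Finset.mem_biUnion.1 h
    exact ⟨hw2, v, hv, ((H.mem_neighborFinset _ _).1 h).symm⟩
  have hT3 : ∀ u ∈ T, H.degree u = 3 := fun u hu => (mem_tightVerts.1 hu).1
  have hQT : Q.card ≤ T.card * 2 :=
    Finset.card_biUnion_le_card_mul _ _ _ fun u hu => (mem_tightVerts.1 hu).2.le
  have hQE : Q.card * 1 ≤ E.card * 1 := by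
    refine Finset.card_mul_le_card_mul H.Adj (fun v hv => ?_) (fun w hw => ?_)
    · obtain ⟨-, w, hw, h⟩ := hQ v hv
      exact Finset.card_pos.2 ⟨w, (Finset.mem_bipartiteAbove _).2 ⟨hw, h⟩⟩
    · rw [Finset.card_le_one]
      intro a ha b hb
      rw [Finset.mem_bipartiteBelow] at ha hb
      by_contra hab
      have := hR.le_degree (hQ a ha.1).1 ha.2.symm (hE w hw).1 hb.2.symm (Ne.symm hab)
      exact not_isLight_of_le hD (by omega) (hQ b hb.1).1
  have hTE : Disjoint T E := Finset.disjoint_left.2 fun u hu hu' => by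
    have := hT3 u hu
    have := (hE u hu').1
    omega
  rcases T.eq_empty_or_nonempty with hT0 | hTne
  · simp [hT0]
  have hdisj : Disjoint (T ∪ E) (Q ∪ H.bigVerts D) := by
    rw [Finset.disjoint_left]
    intro m hm h
    have hmdeg : H.degree m ≤ 3 := (Finset.mem_union.1 hm).elim (fun h => (hT3 m h).le)
      fun h => by have := (hE m h).1; omega
    rcases Finset.mem_union.1 h with h | h
    · rcases Finset.mem_union.1 hm with hm | hm
      · have := hT3 m hm
        have := (hQ m h).1.1
        omega
      · obtain ⟨-, v, hv, hadj⟩ := hE m hm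
        exact hR.not_isLight (hQ v hv).1 hadj.symm (hQ m h).1
    · rw [mem_bigVerts] at h
      omega
  have hN : ∀ m ∈ T ∪ E, ∀ y, H.Adj m y → y ∈ Q ∪ H.bigVerts D := fun m hm y hy => by
    rw [Finset.mem_union, mem_bigVerts]
    rcases Finset.mem_union.1 hm with hm | hm
    · by_cases hyp : y ∈ H.poorNeighbors D m
      · exact Or.inl (Finset.mem_biUnion.2 ⟨m, hm, hyp⟩)
      · exact Or.inr (hR.le_degree_of_mem_tightVerts hm hy hyp)
    · obtain ⟨hm2, v, hv, hadj⟩ := hE m hm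
      by_cases hyv : y = v
      · exact Or.inl (hyv ▸ hv)
      · have := hR.le_degree (hQ v hv).1 hadj hm2 hy hyv
        exact Or.inr (by omega)
  have hg8 := egirth_between_of_odd (H := H) (Finset.disjoint_coe.2 hdisj) (g := 7) (by decide)
    (hg.trans (egirth_anti (between_le.trans hle)))
  have hmain := hG.mul_sum_degree_le hle (hTne.mono Finset.subset_union_left) hdisj hN hg8
  rw [Finset.sum_union hTE, Finset.card_union_of_disjoint hTE, Finset.sum_congr rfl hT3,
    Finset.sum_congr rfl fun m hm => (hE m hm).1, Finset.sum_const, Finset.sum_const, smul_eq_mul,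
    smul_eq_mul] at hmain
  have := Finset.card_union_le Q (H.bigVerts D)
  omega

end IsReduced

end SimpleGraph

namespace SimpleGraph

variable {V : Type*} [Fintype V] [DecidableEq V]

/-- The charge that a vertex `u` sends to its neighbour `v`. -/
def sentCharge (H : SimpleGraph V) [DecidableRel H.Adj] (D : ℕ) (u v : V) : ℤ :=
  if 28 ≤ H.degree u then 9
  else if H.IsLight D v then
    (if H.degree u = 2 then 1 else if v ∈ H.poorNeighbors D u then 7 else 4)
  else 0

/-- The charge of a vertex after discharging. -/
def finalCharge (H : SimpleGraph V) [DecidableRel H.Adj] (D : ℕ) (v : V) : ℤ :=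
  10 * H.degree v - 28 + ∑ u ∈ H.neighborFinset v, H.sentCharge D u v
    - ∑ u ∈ H.neighborFinset v, H.sentCharge D v u

variable {H : SimpleGraph V} [DecidableRel H.Adj] {D : ℕ}

theorem sentCharge_nonneg (u v : V) : 0 ≤ H.sentCharge D u v := by
  rw [sentCharge]
  split_ifs <;> norm_num

theorem sentCharge_le_sum {v a : V} (h : H.Adj v a) :
    H.sentCharge D a v ≤ ∑ u ∈ H.neighborFinset v, H.sentCharge D u v :=
  Finset.single_le_sum (f := fun u => H.sentCharge D u v) (fun u _ => sentCharge_nonneg u v)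
    ((H.mem_neighborFinset _ _).2 h)

theorem sum_finalCharge {s : Finset V} (hs : ∀ u v, H.Adj u v → u ∈ s) :
    ∑ v ∈ s, H.finalCharge D v = 20 * H.edgeFinset.card - 28 * s.card := by
  have hswap : ∑ v ∈ s, ∑ u ∈ H.neighborFinset v, H.sentCharge D u v =
      ∑ v ∈ s, ∑ u ∈ H.neighborFinset v, H.sentCharge D v u := by
    refine Finset.sum_comm' fun x y => ?_
    simp only [mem_neighborFinset]
    exact ⟨fun h => ⟨h.2.symm, hs _ _ h.2.symm⟩, fun h => ⟨hs _ _ h.1.symm, h.1.symm⟩⟩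
  have hdeg : ∑ v ∈ s, H.degree v = 2 * H.edgeFinset.card := by
    rw [← sum_degrees_eq_twice_card_edges]
    refine Finset.sum_subset (Finset.subset_univ _) fun v _ hv => ?_
    rw [← card_neighborFinset_eq_degree, Finset.card_eq_zero, Finset.eq_empty_iff_forall_notMem]
    exact fun u hu => hv (hs v u ((H.mem_neighborFinset _ _).1 hu))
  simp only [finalCharge, Finset.sum_sub_distrib, Finset.sum_add_distrib, hswap, ← Finset.mul_sum,
    ← Nat.cast_sum, hdeg, Finset.sum_const]
  push_cast
  ring

theorem le_finalCharge_of_le_degree {v : V} (h : 28 ≤ H.degree v) :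
    (H.degree v : ℤ) - 28 ≤ H.finalCharge D v := by
  have h1 : ∑ u ∈ H.neighborFinset v, H.sentCharge D v u = 9 * H.degree v := by
    simp only [sentCharge, h, if_true, Finset.sum_const, card_neighborFinset_eq_degree]
    simp [mul_comm]
  have h2 : 0 ≤ ∑ u ∈ H.neighborFinset v, H.sentCharge D u v :=
    Finset.sum_nonneg fun u _ => sentCharge_nonneg u v
  rw [finalCharge, h1]
  linarith

theorem finalCharge_of_degree_eq_two (hD : 192 ≤ D) {v : V} (h2 : H.degree v = 2)
    (hv : ¬ H.IsLight D v) : 0 ≤ H.finalCharge D v := by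
  obtain ⟨a, ha, -⟩ := exists_adj_ne_of_degree_eq_two h2 v
  obtain ⟨b, hb, hab⟩ := exists_adj_ne_of_degree_eq_two h2 a
  have hN := neighborFinset_of_degree_eq_two h2 ha hb hab
  have hsum : D < H.degree a + H.degree b := by
    by_contra! hle
    exact hv ⟨h2, by rwa [hN, Finset.sum_pair hab]⟩
  have hla : H.IsLight D a → H.degree a = 2 := fun h => h.1
  have hlb : H.IsLight D b → H.degree b = 2 := fun h => h.1
  simp only [finalCharge, hN, Finset.sum_pair hab, sentCharge, hv, h2]
  split_ifs <;> grind

namespace IsReduced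

variable (hR : H.IsReduced D)
include hR

theorem finalCharge_of_isLight {v : V} (hv : H.IsLight D v) :
    (if v ∈ H.middleVerts D then -6 else 0 : ℤ) ≤ H.finalCharge D v := by
  obtain ⟨a, ha, -⟩ := exists_adj_ne_of_degree_eq_two hv.1 v
  obtain ⟨b, hb, hab⟩ := exists_adj_ne_of_degree_eq_two hv.1 a
  have hN := neighborFinset_of_degree_eq_two hv.1 ha hb hab
  have hla := hR.not_isLight hv ha
  have hlb := hR.not_isLight hv hb
  have hda : 2 ≤ H.degree a := by
    have := hR.degree_ne_one a
    have : 0 < H.degree a := (H.degree_pos_iff_exists_adj a).2 ⟨v, ha.symm⟩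
    omega
  have hdb : 2 ≤ H.degree b := by
    have := hR.degree_ne_one b
    have : 0 < H.degree b := (H.degree_pos_iff_exists_adj b).2 ⟨v, hb.symm⟩
    omega
  have hpa : v ∈ H.poorNeighbors D a ↔ H.degree b = 2 := by
    rw [mem_poorNeighbors]
    refine ⟨fun ⟨_, _, w, hw, hwa, hw2⟩ => ?_, fun h => ⟨ha.symm, hv, b, hb, hab.symm, h⟩⟩
    rcases eq_of_degree_eq_two hv.1 ha hb hab hw with rfl | rfl
    exacts [absurd rfl hwa, hw2]
  have hpb : v ∈ H.poorNeighbors D b ↔ H.degree a = 2 := by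
    rw [mem_poorNeighbors]
    refine ⟨fun ⟨_, _, w, hw, hwa, hw2⟩ => ?_, fun h => ⟨hb.symm, hv, a, ha, hab, h⟩⟩
    rcases eq_of_degree_eq_two hv.1 ha hb hab hw with rfl | rfl
    exacts [hw2, absurd rfl hwa]
  have hmid : v ∈ H.middleVerts D ↔ H.degree a = 2 ∧ H.degree b = 2 := by
    rw [mem_middleVerts, hN]
    simp [hv]
  simp only [finalCharge, hN, Finset.sum_pair hab, sentCharge, hv, hla, hlb, hpa, hpb, hmid, hv.1]
  split_ifs <;> first | contradiction | omega

variable (hD : 192 ≤ D)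
include hD

theorem finalCharge_of_three_le {v : V} (h3 : 3 ≤ H.degree v) (h28 : H.degree v < 28) :
    (if v ∈ H.tightVerts D then -3 else 0 : ℤ) ≤ H.finalCharge D v := by
  set N := H.neighborFinset v with hNdef
  set L := N.filter (H.IsLight D) with hLdef
  set P := H.poorNeighbors D v with hPdef
  have hNc : N.card = H.degree v := card_neighborFinset_eq_degree _ _
  have hPL : P ⊆ L := fun u hu => by
    have := mem_poorNeighbors.1 hu
    simp [hLdef, hNdef, this.1, this.2.1]
  have hLN : L ⊆ N := Finset.filter_subset _ _
  have hPc := Finset.card_le_card hPL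
  have hsent : ∑ u ∈ N, H.sentCharge D v u = 4 * L.card + 3 * P.card := by
    have : ∀ u ∈ N, H.sentCharge D v u =
        (if u ∈ L then 4 else 0) + (if u ∈ P then 3 else 0) := fun u hu => by
      have hL : u ∈ L ↔ H.IsLight D u := by simp [hLdef, hu]
      have : u ∈ P → u ∈ L := fun h => hPL h
      rw [hL] at this
      simp only [sentCharge, hL, ← hPdef]
      split_ifs <;> first | omega | tauto
    rw [Finset.sum_congr rfl this, Finset.sum_add_distrib, ← Finset.sum_filter, ← Finset.sum_filter,
      Finset.filter_mem_eq_inter, Finset.filter_mem_eq_inter,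
      Finset.inter_eq_right.2 hLN, Finset.inter_eq_right.2 (hPL.trans hLN)]
    simp [mul_comm]
  have hrec : 0 ≤ ∑ u ∈ N, H.sentCharge D u v := Finset.sum_nonneg fun u _ => sentCharge_nonneg u v
  rw [finalCharge, ← hNdef, hsent]
  rcases L.eq_empty_or_nonempty with hL0 | ⟨a, ha⟩
  · have : P.card = 0 := by rw [hL0, Finset.card_empty] at hPc; omega
    rw [hL0, Finset.card_empty, this]
    split_ifs <;> push_cast <;> omega
  rw [hLdef, Finset.mem_filter, hNdef, mem_neighborFinset] at ha
  have hlt := hR.lt_sum_reducedDegree a v ha.2 ha.1.symm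
  rw [← hNdef] at hlt
  have hLlt : L.card < N.card := by
    refine Finset.card_lt_card (Finset.ssubset_iff_subset_ne.2 ⟨hLN, fun h => ?_⟩)
    have h1 : ∀ y ∈ N, H.reducedDegree D y = 1 := fun y hy => by
      rw [← h] at hy
      exact (Finset.mem_filter.1 hy).2.reducedDegree_eq
    rw [Finset.sum_congr rfl h1, Finset.sum_const, hNc, smul_eq_mul] at hlt
    omega
  by_cases h7 : 7 ≤ H.degree v
  · split_ifs <;> omega
  obtain ⟨y, hy, hyd⟩ : ∃ y, H.Adj v y ∧ 28 ≤ H.degree y := by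
    by_contra! hcon
    have := Finset.sum_le_card_nsmul N (fun y => H.reducedDegree D y) 27 fun y hy => by
      have := hcon y ((H.mem_neighborFinset _ _).1 hy)
      exact reducedDegree_le.trans (by omega)
    rw [hNc, smul_eq_mul] at this
    omega
  have h9 : H.sentCharge D y v = 9 := if_pos hyd
  have hrec9 := sentCharge_le_sum (D := D) hy
  rw [h9, ← hNdef] at hrec9
  have htight : H.degree v = 3 → (v ∈ H.tightVerts D ↔ P.card = 2) := fun h => by
    rw [mem_tightVerts, ← hPdef]
    tauto
  split_ifs with hT
  · omega
  · rcases eq_or_ne (H.degree v) 3 with h | h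
    · have := mt (htight h).2 hT
      omega
    · omega

theorem le_finalCharge {v : V} (hv : H.degree v ≠ 0) :
    (if v ∈ H.bigVerts D then 163 else 0 : ℤ) + (if v ∈ H.middleVerts D then -6 else 0)
      + (if v ∈ H.tightVerts D then -3 else 0) ≤ H.finalCharge D v := by
  have h1 := hR.degree_ne_one v
  have hb : v ∈ H.bigVerts D → 191 ≤ H.degree v := fun h => by rw [mem_bigVerts] at h; omega
  have hm : v ∈ H.middleVerts D → H.IsLight D v := fun h => (mem_middleVerts.1 h).1
  have hl : H.IsLight D v → H.degree v = 2 := fun h => h.1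
  have ht : v ∈ H.tightVerts D → H.degree v = 3 := fun h => (mem_tightVerts.1 h).1
  by_cases h28 : 28 ≤ H.degree v
  · have := le_finalCharge_of_le_degree (D := D) h28
    rw [if_neg (c := v ∈ H.middleVerts D) (fun h => by have := hl (hm h); omega),
      if_neg (c := v ∈ H.tightVerts D) (fun h => by have := ht h; omega)]
    split_ifs with h
    · have := hb h
      omega
    · omega
  rw [if_neg (fun h => by have := hb h; omega), zero_add]
  by_cases hL : H.IsLight D v
  · rw [if_neg (c := v ∈ H.tightVerts D) (fun h => by have := ht h; have := hl hL; omega), add_zero]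
    exact hR.finalCharge_of_isLight hL
  rw [if_neg (fun h => hL (hm h)), zero_add]
  rcases eq_or_ne (H.degree v) 2 with h2 | h2
  · rw [if_neg (fun h => by have := ht h; omega)]
    exact finalCharge_of_degree_eq_two hD h2 hL
  · exact hR.finalCharge_of_three_le hD (by omega) (by omega)

/-- A reduced planar graph of girth at least seven has no edges. -/
theorem eq_bot {G : SimpleGraph V} (hG : G.IsPlanar) (hle : H ≤ G) (hg : (7 : ℕ∞) ≤ G.egirth) :
    H = ⊥ := by
  by_contra hne
  obtain ⟨a, b, hab⟩ := ne_bot_iff_exists_adj.1 hne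
  set s : Finset V := {v | H.degree v ≠ 0} with hs
  have hmem : ∀ v, v ∈ s ↔ H.degree v ≠ 0 := fun v => by simp [hs]
  have hsup : ∀ u v, H.Adj u v → u ∈ s := fun u v h => by
    rw [hmem, ← Nat.pos_iff_ne_zero, degree_pos_iff_exists_adj]
    exact ⟨v, h⟩
  have hdens := hG.mul_ncard_edgeSet_le hle (g := 7) (hg.trans (egirth_anti hle))
    ⟨a, hsup a b hab⟩ hsup
  rw [← coe_edgeFinset, Set.ncard_coe_finset] at hdens
  have hp := hR.card_middleVerts_le hD hG hle hg
  have ht := hR.card_tightVerts_le hD hG hle hg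
  have hbs : H.bigVerts D ⊆ s := fun v hv => by
    rw [mem_bigVerts] at hv
    rw [hmem]
    omega
  have htot := Finset.sum_le_sum fun v hv => hR.le_finalCharge hD ((hmem v).1 hv)
  rw [sum_finalCharge hsup] at htot
  simp only [Finset.sum_add_distrib, ← Finset.sum_filter, Finset.filter_mem_eq_inter,
    Finset.sum_const, nsmul_eq_mul] at htot
  rw [Finset.inter_eq_right.2 hbs] at htot
  have h1 := Finset.card_le_card (Finset.inter_subset_right : s ∩ H.middleVerts D ⊆ _)
  have h2 := Finset.card_le_card (Finset.inter_subset_right : s ∩ H.tightVerts D ⊆ _)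
  omega

end IsReduced

end SimpleGraph

namespace SimpleGraph

variable {V : Type*} [Fintype V] [DecidableEq V] {H : SimpleGraph V} [DecidableRel H.Adj]

theorem card_edgeFinset_deleteIncidenceSet_lt {v : V} (hv : H.degree v ≠ 0) :
    (H.deleteIncidenceSet v).edgeFinset.card < H.edgeFinset.card := by
  have h := H.degree_le_card_edgeFinset v
  rw [card_edgeFinset_deleteIncidenceSet]
  omega

theorem card_saturated_mul_le {α β : Type*} [Fintype α] [DecidableEq α] (s : Finset β) (c : β → α)
    (k : ℕ) : (Finset.univ.filter fun a => k ≤ (s.filter (c · = a)).card).card * k ≤ s.card := by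
  rw [← smul_eq_mul]
  refine (Finset.card_nsmul_le_sum _ (fun a => (s.filter (c · = a)).card) k
    fun a ha => (Finset.mem_filter.1 ha).2).trans ?_
  rw [Finset.card_eq_sum_card_fiberwise (f := c) (t := Finset.univ) (by simp)]
  exact Finset.sum_le_sum_of_subset (Finset.subset_univ _)

/-- A frugal colouring extends to a vertex of small degree. -/
theorem exists_isFrugalColoring_of_deleteIncidenceSet {k n : ℕ} {v : V} {c : V → Fin n}
    (hk : 1 ≤ k) (hc : (H.deleteIncidenceSet v).IsFrugalColoring k c) (hv : H.degree v ≤ k)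
    (hn : ∑ y ∈ H.neighborFinset v, (1 + (H.degree y - 1) / k) < n) :
    ∃ c : V → Fin n, H.IsFrugalColoring k c := by
  set sat : V → Finset (Fin n) := fun y =>
    Finset.univ.filter fun a => k ≤ (((H.neighborFinset y).erase v).filter (c · = a)).card with hsat
  have hcard : ((H.neighborFinset v).biUnion fun y => insert (c y) (sat y)).card <
      (Finset.univ : Finset (Fin n)).card := by
    rw [Finset.card_univ, Fintype.card_fin]
    refine (Finset.card_biUnion_le.trans (Finset.sum_le_sum fun y hy => ?_)).trans_lt hn
    refine (Finset.card_insert_le _ _).trans ?_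
    rw [add_comm]
    gcongr
    rw [Nat.le_div_iff_mul_le (by omega)]
    refine (card_saturated_mul_le _ c k).trans_eq ?_
    rw [Finset.card_erase_of_mem, card_neighborFinset_eq_degree]
    rw [mem_neighborFinset] at hy ⊢
    exact hy.symm
  obtain ⟨a, -, ha⟩ := Finset.exists_mem_notMem_of_card_lt_card hcard
  simp only [Finset.mem_biUnion, mem_neighborFinset, Finset.mem_insert, not_exists, not_and,
    not_or] at ha
  refine ⟨Function.update c v a, fun x y hxy => ?_, fun x b => ?_⟩
  · by_cases hx : x = v
    · subst hx
      rw [Function.update_self, Function.update_of_ne hxy.ne']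
      exact (ha y hxy).1
    by_cases hy : y = v
    · subst hy
      rw [Function.update_self, Function.update_of_ne hxy.ne]
      exact fun h => (ha x hxy.symm).1 h.symm
    rw [Function.update_of_ne hx, Function.update_of_ne hy]
    exact hc.1 x y (deleteIncidenceSet_adj.2 ⟨hxy, hx, hy⟩)
  · by_cases hx : x = v
    · subst hx
      refine le_trans ?_ hv
      rw [← card_neighborFinset_eq_degree, ← Set.ncard_coe_finset]
      exact Set.ncard_le_ncard fun u hu => by simpa using hu.1
    by_cases hvx : H.Adj v x ∧ b = a
    · obtain ⟨hvx, rfl⟩ := hvx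
      have hlt : (((H.neighborFinset x).erase v).filter (c · = b)).card < k := by
        have := (ha x hvx).2
        simpa [hsat] using this
      refine le_trans ?_ (Nat.succ_le_of_lt hlt)
      refine le_trans ?_ (Finset.card_insert_le v _)
      rw [← Set.ncard_coe_finset]
      refine Set.ncard_le_ncard fun u hu => ?_
      by_cases huv : u = v
      · simp [huv]
      · have := hu.2
        rw [Function.update_of_ne huv] at this
        have hu1 : H.Adj x u := hu.1
        simp [huv, this, hu1]
    · refine le_trans (Set.ncard_le_ncard fun u hu => ?_) (hc.2 x b)
      have hu1 : H.Adj x u := hu.1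
      have huv : u ≠ v := by
        rintro rfl
        have := hu.2
        rw [Function.update_self] at this
        exact hvx ⟨hu1.symm, this.symm⟩
      have := hu.2
      rw [Function.update_of_ne huv] at this
      exact ⟨deleteIncidenceSet_adj.2 ⟨hu1, hx, huv⟩, this⟩

end SimpleGraph

namespace SimpleGraph

/-- The square of a graph: distinct vertices at distance at most two are joined. -/
def square {V : Type*} (H : SimpleGraph V) : SimpleGraph V where
  Adj u v := u ≠ v ∧ (H.Adj u v ∨ ∃ y, H.Adj y u ∧ H.Adj y v)
  symm := ⟨fun _ _ ⟨hne, h⟩ => ⟨hne.symm, h.imp Adj.symm fun ⟨y, hu, hv⟩ => ⟨y, hv, hu⟩⟩⟩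
  loopless := ⟨fun _ h => h.1 rfl⟩

theorem isFrugalColoring_one_iff {V α : Type*} [Finite V] {H : SimpleGraph V} {c : V → α} :
    H.IsFrugalColoring 1 c ↔ ∀ u v, H.square.Adj u v → c u ≠ c v := by
  constructor
  · rintro ⟨hp, hf⟩ u v ⟨hne, h | ⟨y, hu, hv⟩⟩ hcuv
    · exact hp u v h hcuv
    · exact hne ((Set.ncard_le_one).1 (hf y (c v)) u ⟨hu, hcuv⟩ v ⟨hv, rfl⟩)
  · refine fun h => ⟨fun u v huv => h u v ⟨huv.ne, Or.inl huv⟩, fun v a => ?_⟩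
    refine (Set.ncard_le_one).2 fun x hx y hy => ?_
    by_contra hne
    exact h x y ⟨hne, Or.inr ⟨v, hx.1, hy.1⟩⟩ (hx.2.trans hy.2.symm)

variable {V α : Type*}

/-- The map `c` takes different values on adjacent vertices of `s`. -/
def IsColoringOn (S : SimpleGraph V) (s : Set V) (c : V → α) : Prop :=
  ∀ u ∈ s, ∀ v ∈ s, S.Adj u v → c u ≠ c v

theorem isColoringOn_square [Finite V] {H : SimpleGraph V} {v : V} {s : Set V} {c : V → α}
    (hc : (H.deleteIncidenceSet v).IsFrugalColoring 1 c) (hv : v ∉ s)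
    (hN : ∀ a ∈ s, ∀ b ∈ s, H.Adj v a → H.Adj v b → a = b) : H.square.IsColoringOn s c := by
  rw [isFrugalColoring_one_iff] at hc
  rintro a ha b hb ⟨hne, h⟩
  have hav : a ≠ v := fun h => hv (h ▸ ha)
  have hbv : b ≠ v := fun h => hv (h ▸ hb)
  refine hc a b ⟨hne, h.imp (fun h => deleteIncidenceSet_adj.2 ⟨h, hav, hbv⟩) ?_⟩
  rintro ⟨y, hya, hyb⟩
  have hyv : y ≠ v := by
    rintro rfl
    exact hne (hN a ha b hb hya hyb)
  exact ⟨y, deleteIncidenceSet_adj.2 ⟨hya, hyv, hav⟩, deleteIncidenceSet_adj.2 ⟨hyb, hyv, hbv⟩⟩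

variable [DecidableEq V]

theorem IsColoringOn.update {S : SimpleGraph V} {s : Set V} {c : V → α} (hc : S.IsColoringOn s c)
    {x : V} {a : α} (ha : ∀ z ∈ s, S.Adj x z → a ≠ c z) :
    S.IsColoringOn (insert x s) (Function.update c x a) := by
  intro u hu v hv huv
  by_cases hux : u = x
  · subst hux
    rw [Function.update_self, Function.update_of_ne huv.ne']
    exact ha v (hv.resolve_left huv.ne') huv
  by_cases hvx : v = x
  · subst hvx
    rw [Function.update_self, Function.update_of_ne huv.ne]
    exact (ha u (hu.resolve_left huv.ne) huv.symm).symm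
  rw [Function.update_of_ne hux, Function.update_of_ne hvx]
  exact hc u (hu.resolve_left hux) v (hv.resolve_left hvx) huv

theorem IsColoringOn.exists_update {S : SimpleGraph V} {s : Set V} {n : ℕ} {c : V → Fin n}
    (hc : S.IsColoringOn s c) {x : V} {t : Finset V} (ht : ∀ z ∈ s, S.Adj x z → z ∈ t)
    (hn : t.card < n) : ∃ a, S.IsColoringOn (insert x s) (Function.update c x a) := by
  have hcard : (t.image c).card < (Finset.univ : Finset (Fin n)).card := by
    rw [Finset.card_univ, Fintype.card_fin]
    exact Finset.card_image_le.trans_lt hn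
  obtain ⟨a, -, ha⟩ := Finset.exists_mem_notMem_of_card_lt_card hcard
  exact ⟨a, hc.update fun z hz hxz h => ha (Finset.mem_image.2 ⟨z, ht z hz hxz, h.symm⟩)⟩

theorem IsColoringOn.exists_univ {S : SimpleGraph V} {n : ℕ} (t : V → Finset V)
    (ht : ∀ x z, S.Adj x z → z ∈ t x) (r : Finset V) :
    ∀ {c : V → Fin n}, S.IsColoringOn {x | x ∉ r} c → (∀ x ∈ r, (t x).card < n) →
      ∃ c : V → Fin n, ∀ u v, S.Adj u v → c u ≠ c v := by
  induction r using Finset.induction_on with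
  | empty => exact fun {c} hc _ => ⟨c, fun u v => hc u (by simp) v (by simp)⟩
  | insert x r hx ih =>
    intro c hc hr
    obtain ⟨a, ha⟩ := hc.exists_update (fun z _ => ht x z) (hr x (Finset.mem_insert_self _ _))
    refine ih (c := Function.update c x a) (fun u hu v hv => ha u ?_ v ?_)
      fun y hy => hr y (Finset.mem_insert_of_mem hy)
    · by_cases h : u = x
      · exact Or.inl h
      · exact Or.inr (by simpa [h] using hu)
    · by_cases h : v = x
      · exact Or.inl h
      · exact Or.inr (by simpa [h] using hv)

variable [Fintype V] {H : SimpleGraph V} [DecidableRel H.Adj] {D : ℕ}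

theorem square_adj_mem {u z : V} (h : H.square.Adj u z) : z ∈ (H.neighborFinset u).biUnion
    fun y => insert y ((H.neighborFinset y).erase u) := by
  rw [Finset.mem_biUnion]
  rcases h with ⟨hne, h | ⟨y, hu, hv⟩⟩
  · exact ⟨z, by simpa using h, Finset.mem_insert_self _ _⟩
  · exact ⟨y, by simpa using hu.symm, by simp [hne.symm, hv]⟩

theorem card_erase_neighborFinset {u y : V} (h : H.Adj u y) :
    ((H.neighborFinset y).erase u).card = H.degree y - 1 := by
  rw [Finset.card_erase_of_mem (by simpa using h.symm), card_neighborFinset_eq_degree]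

theorem card_square_le (u : V) : ((H.neighborFinset u).biUnion
    fun y => insert y ((H.neighborFinset y).erase u)).card ≤
      ∑ y ∈ H.neighborFinset u, H.degree y := by
  refine Finset.card_biUnion_le.trans (Finset.sum_le_sum fun y hy => ?_)
  rw [mem_neighborFinset] at hy
  have := (H.degree_pos_iff_exists_adj y).2 ⟨u, hy.symm⟩
  have h := Finset.card_insert_le y ((H.neighborFinset y).erase u)
  rw [card_erase_neighborFinset hy] at h
  omega

theorem card_square_not_isLight_le (u : V) :
    (((H.neighborFinset u).biUnion fun y => insert y ((H.neighborFinset y).erase u)).filter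
      fun z => ¬ H.IsLight D z).card ≤ ∑ y ∈ H.neighborFinset u, H.reducedDegree D y := by
  rw [Finset.filter_biUnion]
  refine Finset.card_biUnion_le.trans (Finset.sum_le_sum fun y hy => ?_)
  rw [mem_neighborFinset] at hy
  have := (H.degree_pos_iff_exists_adj y).2 ⟨u, hy.symm⟩
  rw [reducedDegree]
  split_ifs with hl
  · rw [Finset.filter_insert, if_neg (not_not.2 hl)]
    refine (Finset.card_filter_le _ _).trans ?_
    rw [card_erase_neighborFinset hy, hl.1]
  · refine (Finset.card_filter_le _ _).trans ((Finset.card_insert_le _ _).trans ?_)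
    rw [card_erase_neighborFinset hy]
    omega

/-- Light vertices can be coloured last. -/
theorem IsColoringOn.exists_isFrugalColoring {s : Set V} {c : V → Fin (D + 1)}
    (hc : H.square.IsColoringOn s c) (hs : ∀ x, x ∉ s → H.IsLight D x) :
    ∃ c : V → Fin (D + 1), H.IsFrugalColoring 1 c := by
  simp only [isFrugalColoring_one_iff]
  refine IsColoringOn.exists_univ _ (fun x z => square_adj_mem) {x | H.IsLight D x} (c := c)
    (fun u hu v hv => hc u ?_ v ?_) fun x hx => ?_
  · by_contra h
    exact hu (by simpa using hs u h)
  · by_contra h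
    exact hv (by simpa using hs v h)
  · have : H.IsLight D x := by simpa using hx
    exact Nat.lt_succ_of_le ((card_square_le x).trans this.2)

theorem exists_isFrugalColoring_of_sum_reducedDegree_le {v u : V} {c : V → Fin (D + 1)}
    (hc : (H.deleteIncidenceSet v).IsFrugalColoring 1 c) (hv : H.IsLight D v) (hvu : H.Adj v u)
    (hle : ∑ y ∈ H.neighborFinset u, H.reducedDegree D y ≤ D) :
    ∃ c : V → Fin (D + 1), H.IsFrugalColoring 1 c := by
  obtain ⟨w, hvw, huw⟩ := exists_adj_ne_of_degree_eq_two hv.1 u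
  have hs : H.square.IsColoringOn {x | ¬ H.IsLight D x ∧ x ≠ u} c := by
    refine isColoringOn_square hc (fun h => h.1 hv) fun a ha b hb hva hvb => ?_
    rw [(eq_of_degree_eq_two hv.1 hvu hvw huw hva).resolve_left ha.2,
      (eq_of_degree_eq_two hv.1 hvu hvw huw hvb).resolve_left hb.2]
  obtain ⟨a, ha⟩ := hs.exists_update (x := u)
    (fun z hz huz => Finset.mem_filter.2 ⟨square_adj_mem huz, hz.1⟩)
    (Nat.lt_succ_of_le ((card_square_not_isLight_le u).trans hle))
  refine ha.exists_isFrugalColoring fun x hx => ?_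
  by_contra h
  exact hx (or_iff_not_imp_left.2 fun hxu => ⟨h, hxu⟩)

end SimpleGraph

namespace SimpleGraph

variable {V : Type*} [DecidableEq V] [Fintype V] {H : SimpleGraph V} [DecidableRel H.Adj] {D k : ℕ}

theorem eq_or_adj_of_square_adj {w x v u z : V} (hw : H.degree w = 2) (hwx : H.Adj w x)
    (hwv : H.Adj w v) (hxv : x ≠ v) (hv : H.degree v = 2) (hvu : H.Adj v u) (hwu : w ≠ u)
    (h : H.square.Adj w z) (hzv : z ≠ v) (hzu : z ≠ u) : z = x ∨ H.Adj x z := by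
  rcases h with ⟨hne, h | ⟨y, hyw, hyz⟩⟩
  · exact Or.inl ((eq_of_degree_eq_two hw hwx hwv hxv h).resolve_right hzv)
  · rcases eq_of_degree_eq_two hw hwx hwv hxv hyw.symm with rfl | rfl
    · exact Or.inr hyz
    · rcases eq_of_degree_eq_two hv hyw hvu hwu hyz with rfl | rfl
      exacts [absurd rfl hne, absurd rfl hzu]

theorem exists_two_colors {x w₁ w₂ : V} (h₁ : H.Adj x w₁) (h₂ : H.Adj x w₂) (hne : w₁ ≠ w₂)
    (hD : H.degree x ≤ D) (c : V → Fin (D + 1)) : ∃ a b, a ≠ b ∧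
      ∀ z, z ≠ w₁ → z ≠ w₂ → z = x ∨ H.Adj x z → a ≠ c z ∧ b ≠ c z := by
  set t := (insert x (((H.neighborFinset x).erase w₁).erase w₂)).image c with ht
  have hcard : 1 < tᶜ.card := by
    have h := (Finset.card_image_le (f := c)).trans
      (Finset.card_insert_le x (((H.neighborFinset x).erase w₁).erase w₂))
    rw [Finset.card_erase_of_mem (by simp [h₂, hne.symm]), card_erase_neighborFinset h₁.symm,
      ← ht] at h
    have hd : 1 < H.degree x := by
      rw [← card_neighborFinset_eq_degree, Finset.one_lt_card]
      exact ⟨w₁, by simpa using h₁, w₂, by simpa using h₂, hne⟩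
    rw [Finset.card_compl, Fintype.card_fin]
    omega
  obtain ⟨a, ha, b, hb, hab⟩ := Finset.one_lt_card.1 hcard
  rw [Finset.mem_compl] at ha hb
  refine ⟨a, b, hab, fun z hz₁ hz₂ hz => ?_⟩
  have hzt : c z ∈ t := Finset.mem_image_of_mem c (by simp [hz₁, hz₂, hz])
  exact ⟨fun h => ha (h ▸ hzt), fun h => hb (h ▸ hzt)⟩

theorem exists_isFrugalColoring_of_octagon {x w₁ v₁ u₁ y u₂ v₂ w₂ : V} {c : V → Fin (D + 1)}
    (hc : (H.deleteIncidenceSet v₁).IsFrugalColoring 1 c) (hx : H.degree x ≤ D)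
    (hy : H.degree y ≤ D) (hd : [x, w₁, v₁, u₁, y, u₂, v₂, w₂].Nodup)
    (hxw₁ : H.Adj x w₁) (hwv₁ : H.Adj w₁ v₁) (hvu₁ : H.Adj v₁ u₁) (huy₁ : H.Adj u₁ y)
    (hyu₂ : H.Adj y u₂) (huv₂ : H.Adj u₂ v₂) (hvw₂ : H.Adj v₂ w₂) (hwx₂ : H.Adj w₂ x)
    (hv₁ : H.IsLight D v₁) (hv₂ : H.IsLight D v₂) (hw₁ : H.degree w₁ = 2) (hu₁ : H.degree u₁ = 2)
    (hw₂ : H.degree w₂ = 2) (hu₂ : H.degree u₂ = 2) :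
    ∃ c : V → Fin (D + 1), H.IsFrugalColoring 1 c := by
  simp only [List.nodup_cons, List.mem_cons, not_or, List.not_mem_nil, not_false_eq_true,
    and_true, List.nodup_nil] at hd
  obtain ⟨⟨n1, n2, n3, n4, n5, n6, n7⟩, ⟨n8, n9, n10, n11, n12, n13⟩, ⟨n14, n15, n16, n17, n18⟩,
    ⟨n19, n20, n21, n22⟩, ⟨n23, n24, n25⟩, ⟨n26, n27⟩, n28⟩ := hd
  set s : Set V := {z | ¬ H.IsLight D z ∧ z ≠ w₁ ∧ z ≠ w₂ ∧ z ≠ u₁ ∧ z ≠ u₂} with hs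
  have hcs : H.square.IsColoringOn s c := by
    refine isColoringOn_square hc (fun h => h.1 hv₁) fun a ha b _ hva _ => ?_
    rcases eq_of_degree_eq_two hv₁.1 hwv₁.symm hvu₁ n9 hva with rfl | rfl
    exacts [absurd rfl ha.2.1, absurd rfl ha.2.2.2.1]
  obtain ⟨a₁, a₂, ha, hax⟩ := exists_two_colors hxw₁ hwx₂.symm n13 hx c
  obtain ⟨b₁, b₂, hb, hby, hab₁, hab₂⟩ : ∃ b₁ b₂, b₁ ≠ b₂ ∧
      (∀ z, z ≠ u₁ → z ≠ u₂ → z = y ∨ H.Adj y z → b₁ ≠ c z ∧ b₂ ≠ c z) ∧ a₁ ≠ b₁ ∧ a₂ ≠ b₂ := by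
    obtain ⟨b₁, b₂, hb, hby⟩ := exists_two_colors huy₁.symm hyu₂ n20 hy c
    by_cases h : a₁ ≠ b₁ ∧ a₂ ≠ b₂
    · exact ⟨b₁, b₂, hb, hby, h⟩
    · exact ⟨b₂, b₁, hb.symm, fun z h₁ h₂ h => (hby z h₁ h₂ h).symm, by grind, by grind⟩
  have hlight : ∀ {z v}, z ∈ s → H.IsLight D v → z ≠ v := fun hz hv h => hz.1 (h ▸ hv)
  have sw₁ : ∀ {z}, H.square.Adj w₁ z → z ≠ v₁ → z ≠ u₁ → z = x ∨ H.Adj x z :=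
    eq_or_adj_of_square_adj hw₁ hxw₁.symm hwv₁ n2 hv₁.1 hvu₁ n9
  have sw₂ : ∀ {z}, H.square.Adj w₂ z → z ≠ v₂ → z ≠ u₂ → z = x ∨ H.Adj x z :=
    eq_or_adj_of_square_adj hw₂ hwx₂ hvw₂.symm n6 hv₂.1 huv₂.symm (Ne.symm n27)
  have su₁ : ∀ {z}, H.square.Adj u₁ z → z ≠ v₁ → z ≠ w₁ → z = y ∨ H.Adj y z :=
    eq_or_adj_of_square_adj hu₁ huy₁ hvu₁.symm (Ne.symm n15) hv₁.1 hwv₁.symm (Ne.symm n9)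
  have su₂ : ∀ {z}, H.square.Adj u₂ z → z ≠ v₂ → z ≠ w₂ → z = y ∨ H.Adj y z :=
    eq_or_adj_of_square_adj hu₂ hyu₂.symm huv₂ n24 hv₂.1 hvw₂ n27
  have hwu₁₂ : ¬ H.square.Adj w₁ u₂ := fun h => by
    rcases sw₁ h (Ne.symm n16) (Ne.symm n20) with h | h
    · exact n5 h.symm
    · exact (eq_of_degree_eq_two hu₂ hyu₂.symm huv₂ n24 h.symm).elim n4 n6
  have hwu₂₁ : ¬ H.square.Adj w₂ u₁ := fun h => by
    rcases sw₂ h n21 n20 with h | h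
    · exact n3 h.symm
    · exact (eq_of_degree_eq_two hu₁ huy₁ hvu₁.symm (Ne.symm n15) h.symm).elim n4 n2
  have h1 := hcs.update (x := w₁) (a := a₁) fun z hz h =>
    (hax z hz.2.1 hz.2.2.1 (sw₁ h (hlight hz hv₁) hz.2.2.2.1)).1
  have h2 := h1.update (x := w₂) (a := a₂) fun z hz h => by
    by_cases hzw : z = w₁
    · rw [hzw, Function.update_self]
      exact ha.symm
    · have hz := hz.resolve_left hzw
      rw [Function.update_of_ne hzw]
      exact (hax z hz.2.1 hz.2.2.1 (sw₂ h (hlight hz hv₂) hz.2.2.2.2)).2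
  have h3 := h2.update (x := u₁) (a := b₁) fun z hz h => by
    have hzw₂ : z ≠ w₂ := by
      rintro rfl
      exact hwu₂₁ h.symm
    rw [Function.update_of_ne hzw₂]
    by_cases hzw : z = w₁
    · rw [hzw, Function.update_self]
      exact hab₁.symm
    · have hz := (hz.resolve_left hzw₂).resolve_left hzw
      rw [Function.update_of_ne hzw]
      exact (hby z hz.2.2.2.1 hz.2.2.2.2 (su₁ h (hlight hz hv₁) hz.2.1)).1
  have h4 := h3.update (x := u₂) (a := b₂) fun z hz h => by
    by_cases hzu : z = u₁
    · rw [hzu, Function.update_self]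
      exact hb.symm
    rw [Function.update_of_ne hzu]
    by_cases hzw₂ : z = w₂
    · rw [hzw₂, Function.update_self]
      exact hab₂.symm
    have hzw : z ≠ w₁ := by
      rintro rfl
      exact hwu₁₂ h.symm
    have hz := ((hz.resolve_left hzu).resolve_left hzw₂).resolve_left hzw
    rw [Function.update_of_ne hzw₂, Function.update_of_ne hzw]
    exact (hby z hz.2.2.2.1 hz.2.2.2.2 (su₂ h (hlight hz hv₂) hz.2.2.1)).2
  refine h4.exists_isFrugalColoring fun z hz => ?_
  simp only [Set.mem_insert_iff, not_or, hs, Set.mem_ofPred_eq] at hz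
  by_contra hl
  exact hz.2.2.2.2 ⟨hl, hz.2.2.2.1, hz.2.2.1, hz.2.1, hz.1⟩

theorem IsLight.sum_lt {v : V} (hv : H.IsLight D v) (hk : 1 ≤ k) :
    ∑ y ∈ H.neighborFinset v, (1 + (H.degree y - 1) / k) < (D - 1 + (k - 1)) / k + 2 := by
  obtain ⟨a, ha, -⟩ := exists_adj_ne_of_degree_eq_two hv.1 v
  obtain ⟨b, hb, hab⟩ := exists_adj_ne_of_degree_eq_two hv.1 a
  have hsum := hv.2
  have hda := (H.degree_pos_iff_exists_adj a).2 ⟨v, ha.symm⟩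
  have hdb := (H.degree_pos_iff_exists_adj b).2 ⟨v, hb.symm⟩
  rw [neighborFinset_of_degree_eq_two hv.1 ha hb hab, Finset.sum_pair hab] at hsum ⊢
  have h1 : (H.degree a - 1) / k + (H.degree b - 1) / k ≤ _ := Nat.div_add_div_le_add_div
  have h2 : (H.degree a - 1 + (H.degree b - 1)) / k + 1 ≤ (D - 1 + (k - 1)) / k := by
    rw [← Nat.add_div_right _ (by omega)]
    exact Nat.div_le_div_right (by omega)
  omega

/-- An edge-minimal graph without a frugal colouring is reduced. -/
theorem isReduced_of_minimal (hk : 1 ≤ k) (hD : ∀ v, H.degree v ≤ D) (hD1 : 1 ≤ D)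
    (hmin : ∀ v, H.degree v ≠ 0 → ∃ c : V → Fin ((D - 1 + (k - 1)) / k + 2),
      (H.deleteIncidenceSet v).IsFrugalColoring k c)
    (hno : ¬ ∃ c : V → Fin ((D - 1 + (k - 1)) / k + 2), H.IsFrugalColoring k c) :
    H.IsReduced D := by
  have hone : ∀ v, H.degree v ≠ 1 := fun v hv => by
    obtain ⟨c, hc⟩ := hmin v (by omega)
    refine hno (exists_isFrugalColoring_of_deleteIncidenceSet hk hc (by omega) ?_)
    obtain ⟨y, hy⟩ := Finset.card_eq_one.1 ((card_neighborFinset_eq_degree H v).trans hv)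
    rw [hy, Finset.sum_singleton]
    have : (H.degree y - 1) / k ≤ (D - 1 + (k - 1)) / k :=
      Nat.div_le_div_right (by have := hD y; omega)
    omega
  have hlight : ∀ {v}, H.IsLight D v → k = 1 := fun {v} hv => by
    by_contra h
    obtain ⟨c, hc⟩ := hmin v (by rw [hv.1]; omega)
    exact hno (exists_isFrugalColoring_of_deleteIncidenceSet hk hc (by rw [hv.1]; omega)
      (hv.sum_lt hk))
  have hmin' : ∀ {v}, H.IsLight D v →
      (∃ c : V → Fin (D + 1), (H.deleteIncidenceSet v).IsFrugalColoring 1 c) ∧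
      ¬ ∃ c : V → Fin (D + 1), H.IsFrugalColoring 1 c := fun {v} hv => by
    have hn : (D - 1 + (k - 1)) / k + 2 = D + 1 := by
      rw [hlight hv, Nat.div_one]
      omega
    have h := hmin v (by rw [hv.1]; omega)
    rw [hn, hlight hv] at h hno
    exact ⟨h, hno⟩
  refine ⟨hone, fun v u hv hvu => ?_, fun x w₁ v₁ u₁ y u₂ v₂ w₂ hd h1 h2 h3 h4 h5 h6 h7 h8 hv₁
    hv₂ hw₁ hu₁ hw₂ hu₂ => ?_⟩
  · by_contra! hle
    obtain ⟨⟨c, hc⟩, hno'⟩ := hmin' hv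
    exact hno' (exists_isFrugalColoring_of_sum_reducedDegree_le hc hv hvu hle)
  · obtain ⟨⟨c, hc⟩, hno'⟩ := hmin' hv₁
    exact hno' (exists_isFrugalColoring_of_octagon hc (hD x) (hD y) hd h1 h2 h3 h4 h5 h6 h7 h8
      hv₁ hv₂ hw₁ hu₁ hw₂ hu₂)

/-- Subgraphs of planar graphs of girth at least seven have frugal colourings with few colours. -/
theorem exists_isFrugalColoring {G : SimpleGraph V} [DecidableRel G.Adj] (hG : G.IsPlanar)
    (hk : 1 ≤ k) (hg : (7 : ℕ∞) ≤ G.egirth) (hD : 192 ≤ G.maxDegree) (hle : H ≤ G) :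
    ∃ c : V → Fin ((G.maxDegree - 1 + (k - 1)) / k + 2), H.IsFrugalColoring k c := by
  induction hm : H.edgeFinset.card using Nat.strong_induction_on generalizing H with
  | _ m ih =>
    subst hm
    by_contra hno
    have hR : H.IsReduced G.maxDegree := by
      refine isReduced_of_minimal hk (fun v => ?_) (by omega) (fun v hv => ?_) hno
      · exact (degree_le_of_le hle).trans (G.degree_le_maxDegree v)
      · exact ih _ (card_edgeFinset_deleteIncidenceSet_lt hv)
          ((H.deleteIncidenceSet_le v).trans hle) rfl
    have hbot := hR.eq_bot hD hG hle hg
    refine hno ⟨fun _ => 0, fun u v h => ?_, fun v a => ?_⟩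
    · rw [hbot] at h
      exact absurd h id
    · simp [hbot]

end SimpleGraph

/-- For `k ≥ 1` and a planar graph `G` of girth at least `7` with `Δ(G) ≥ 190 + 2k`,
`χ_k(G) ≤ ⌈(Δ(G) - 1)/k⌉ + 2` (ceiling written `(a + k - 1)/k`). -/
theorem frugalChromaticNumber_girth_seven {V : Type*} [Fintype V] (G : SimpleGraph V)
    [DecidableRel G.Adj] (hG : G.IsPlanar) (k : ℕ) (hk : 1 ≤ k)
    (hgirth : (7 : ℕ∞) ≤ G.egirth) (hΔ : 190 + 2 * k ≤ G.maxDegree) :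
    G.frugalChromaticNumber k ≤ (G.maxDegree - 1 + (k - 1)) / k + 2 := by
  classical
  obtain ⟨c, hp, hf⟩ := exists_isFrugalColoring hG hk hgirth (by omega) le_rfl
  refine Nat.sInf_le ⟨fun v => c v, fun v => (c v).isLt,
    fun u v h he => hp u v h (Fin.ext he), fun v a => ?_⟩
  by_cases ha : ∃ b, (c b : ℕ) = a
  · obtain ⟨b, rfl⟩ := ha
    simpa only [Fin.ext_iff] using hf v (c b)
  · have : {u | u ∈ G.neighborSet v ∧ (c u : ℕ) = a} = ∅ :=
      Set.eq_empty_iff_forall_notMem.2 fun u hu => ha ⟨u, hu.2⟩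
    rw [this, Set.ncard_empty]
    omega
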